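/- arXiv:1707.08890 — 4 statements merged into one kernel-verified Lean document; each statement's English description precedes it below -/
import Mathlib

section
/- Let (X_n) be a determining sequence of random variables on a probability space (Ω, 𝓕, P) with limit random measure μ. Then there exists a subsequence (X_{n_k}) and random variables X and Y ≥ 0 such that (X_{n_k}), together with all of its further subsequences, satisfies the central limit theorem N^{-1/2} Σ_{k=1}^N (X_{n_k} − X) → N(0, Y) in distribution (where N(0, Y) is the distribution of Y^{1/2}·ζ with ζ a standard normal random variable independent of Y; equivalently, the characteristic functions converge to E exp(−Y t²/2) for every t) if and only if ∫_ℝ x² dμ(x) < ∞ almost surely. -/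
open MeasureTheory Filter Finset
open scoped Topology BoundedContinuousFunction ENNReal

/-- The characteristic function of a measure on `ℝ`. -/
noncomputable def charFn (μ : Measure ℝ) (t : ℝ) : ℂ :=
  ∫ x, Complex.exp (Complex.I * (t * x)) ∂μ

/-- `μ ∈ S(α, c)`: `μ` is a symmetric probability distribution on `ℝ` whose characteristic
function satisfies `φ(t) = 1 - c|t|^α + o(|t|^α)` as `t → 0`. -/
def MemS (α c : ℝ) (μ : Measure ℝ) : Prop :=
  IsProbabilityMeasure μ ∧ μ.map (fun x => -x) = μ ∧
    Asymptotics.IsLittleO (𝓝 (0 : ℝ))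
      (fun t : ℝ => charFn μ t - ((1 - c * |t| ^ α : ℝ) : ℂ))
      (fun t : ℝ => |t| ^ α)

/-- `β` is the function associated with `μ ∈ S(α, c)`:
`φ(t) = 1 - c|t|^α + β(t)|t|^α` with `β` bounded continuous and `β 0 = 0`. -/
structure IsAssocFn (α c : ℝ) (μ : Measure ℝ) (β : ℝ → ℝ) : Prop where
  continuous : Continuous β
  bounded : ∃ M : ℝ, ∀ t, |β t| ≤ M
  zero : β 0 = 0
  eq : ∀ t : ℝ, charFn μ t = ((1 - c * |t| ^ α + β t * |t| ^ α : ℝ) : ℂ)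

/-- The metric `ρ` on `S(α, c)`, expressed in terms of the associated functions. -/
noncomputable def rho (β₁ β₂ : ℝ → ℝ) : ℝ :=
  (⨆ t : {t : ℝ // |t| ≤ 1}, |β₁ t.1 - β₂ t.1|) +
    ∑' k : ℕ, (2 ^ k : ℝ)⁻¹ *
      ⨆ t : {t : ℝ // 2 ^ k ≤ |t| ∧ |t| ≤ 2 ^ (k + 1)}, |β₁ t.1 - β₂ t.1|

/-- The normalization `A_N = (∑_{k=1}^N |a_k|^α)^{1/α}`. -/
noncomputable def wA (α : ℝ) (a : ℕ → ℝ) (N : ℕ) : ℝ :=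
  (∑ k ∈ Finset.range N, |a k| ^ α) ^ (1 / α)

/-- The uniform asymptotic negligibility condition `max_{1≤k≤N} |a_k| = o(A_N)`. -/
def UAN (α : ℝ) (a : ℕ → ℝ) : Prop :=
  ∀ ε > (0 : ℝ), ∃ N₀ : ℕ, ∀ N ≥ N₀, ∀ k < N, |a k| ≤ ε * wA α a N

/-- `F` is a distribution function. -/
def IsDistFun (F : ℝ → ℝ) : Prop :=
  Monotone F ∧ Tendsto F atBot (𝓝 0) ∧ Tendsto F atTop (𝓝 1)

/-- `(X_n)` is a determining sequence: relative to any set `A` of positive probability, it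
has a limit distribution `F_A`. -/
def Determining {Ω : Type*} [MeasurableSpace Ω] (P : Measure Ω) (X : ℕ → Ω → ℝ) : Prop :=
  ∀ A : Set Ω, MeasurableSet A → P A ≠ 0 →
    ∃ F : ℝ → ℝ, IsDistFun F ∧
      ∀ t : ℝ, ContinuousAt F t →
        Tendsto (fun n => (P (A ∩ {ω | X n ω < t})).toReal / (P A).toReal) atTop (𝓝 (F t))

/-- `μ` is the limit random measure of the determining sequence `(X_n)`: a measurable map to
the probability measures on `ℝ` such that for every continuity point `t` of `F_Ω` the
indicators `1{X_n ≤ t}` converge weakly in `L^∞` to `μ(-∞, t]`. -/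
def IsLimitRandomMeasure {Ω : Type*} [MeasurableSpace Ω] (P : Measure Ω)
    (X : ℕ → Ω → ℝ) (μ : Ω → Measure ℝ) : Prop :=
  (∀ ω, IsProbabilityMeasure (μ ω)) ∧
  (∀ s : Set ℝ, MeasurableSet s → Measurable fun ω => μ ω s) ∧
  ∃ F : ℝ → ℝ, IsDistFun F ∧
    (∀ t : ℝ, ContinuousAt F t →
      Tendsto (fun n => (P {ω | X n ω < t}).toReal) atTop (𝓝 (F t))) ∧
    ∀ t : ℝ, ContinuousAt F t → ∀ η : Ω → ℝ, Integrable η P →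
      Tendsto (fun n => ∫ ω, ({ω' | X n ω' ≤ t}.indicator (fun _ => (1 : ℝ)) ω) * η ω ∂P)
        atTop (𝓝 (∫ ω, (μ ω (Set.Iic t)).toReal * η ω ∂P))


namespace SubseqCLT

open ProbabilityTheory

/-- Convergence of distribution functions on a dense set implies weak convergence. -/
lemma tendsto_of_cdf_dense {D : Set ℝ} (hD : Dense D) (ν : ℕ → ProbabilityMeasure ℝ)
    (ν' : ProbabilityMeasure ℝ)
    (h : ∀ t ∈ D, Tendsto (fun n => (ν n : Measure ℝ).real (Set.Iic t)) atTop
      (𝓝 ((ν' : Measure ℝ).real (Set.Iic t)))) :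
    Tendsto ν atTop (𝓝 ν') := by
  have hpi : IsPiSystem {s : Set ℝ | ∃ a ∈ D, ∃ b ∈ D, a ≤ b ∧ s = Set.Ioc a b} := by
    rintro s ⟨a, ha, b, hb, hab, rfl⟩ t ⟨c, hc, d, hd, hcd, rfl⟩ hne
    rw [Set.Ioc_inter_Ioc] at hne ⊢
    refine ⟨a ⊔ c, ?_, b ⊓ d, ?_, ?_, rfl⟩
    · rcases max_choice a c with h | h <;> rw [h] <;> assumption
    · rcases min_choice b d with h | h <;> rw [h] <;> assumption
    · obtain ⟨x, hx⟩ := hne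
      exact (hx.1.trans_le hx.2).le
  refine hpi.tendsto_probabilityMeasure_of_tendsto_of_mem ?_ ?_ ?_
  · rintro s ⟨a, ha, b, hb, hab, rfl⟩
    exact measurableSet_Ioc
  · intro u hu x hx
    obtain ⟨ε, hε, hball⟩ := Metric.isOpen_iff.1 hu x hx
    obtain ⟨a, ha, haD⟩ := hD.exists_between (show x - ε < x by linarith)
    obtain ⟨b, hb, hbD⟩ := hD.exists_between (show x < x + ε by linarith)
    refine ⟨Set.Ioc a b, ⟨a, ha, b, hb, by linarith [haD.2, hbD.1], rfl⟩, Ioc_mem_nhds haD.2 hbD.1, ?_⟩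
    intro y hy
    apply hball
    rw [Metric.mem_ball, Real.dist_eq, abs_lt]
    constructor <;> linarith [hy.1, hy.2, haD.1, hbD.2]
  · rintro s ⟨a, ha, b, hb, hab, rfl⟩
    have key : ∀ m : ProbabilityMeasure ℝ, ((m (Set.Ioc a b) : NNReal) : ℝ)
        = (m : Measure ℝ).real (Set.Iic b) - (m : Measure ℝ).real (Set.Iic a) := by
      intro m
      have hs : Set.Ioc a b = Set.Iic b \ Set.Iic a := by
        ext x
        simp [and_comm]
      rw [hs, ← measureReal_sdiff (Set.Iic_subset_Iic.2 hab) measurableSet_Iic]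
      rfl
    rw [← NNReal.tendsto_coe]
    simp_rw [key]
    exact (h b hb).sub (h a ha)

variable {Ω : Type*} [MeasurableSpace Ω]

/-- Weak convergence relative to a nonnegative bounded density. -/
lemma weak_nonneg (P : Measure Ω) [IsProbabilityMeasure P]
    (X : ℕ → Ω → ℝ) (hX : ∀ n, Measurable (X n)) (κ : Kernel Ω ℝ) [IsMarkovKernel κ]
    {D : Set ℝ} (hD : Dense D)
    (h : ∀ t ∈ D, ∀ η : Ω → ℝ, Integrable η P →
      Tendsto (fun n => ∫ ω, ({ω' | X n ω' ≤ t}.indicator (fun _ => (1 : ℝ)) ω) * η ω ∂P)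
        atTop (𝓝 (∫ ω, (κ ω (Set.Iic t)).toReal * η ω ∂P)))
    (η : Ω → ℝ) (hη : Measurable η) (h0 : ∀ ω, 0 ≤ η ω) (hi : Integrable η P)
    (f : ℝ →ᵇ ℂ) :
    Tendsto (fun n => ∫ ω, (η ω : ℂ) * f (X n ω) ∂P) atTop
      (𝓝 (∫ ω, (η ω : ℂ) * (∫ x, f x ∂(κ ω)) ∂P)) := by
  by_cases hz : ∫ ω, η ω ∂P = 0
  · have h1 : η =ᵐ[P] 0 := (integral_eq_zero_iff_of_nonneg h0 hi).1 hz
    have h2 : ∀ g : Ω → ℂ, ∫ ω, (η ω : ℂ) * g ω ∂P = 0 := by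
      intro g
      rw [integral_eq_zero_of_ae]
      filter_upwards [h1] with ω hω
      simp [hω]
    simp_rw [h2]
    exact tendsto_const_nhds
  set c : ℝ := ∫ ω, η ω ∂P with hc
  have hcpos : 0 < c := lt_of_le_of_ne (integral_nonneg h0) (Ne.symm hz)
  set ρ : Ω → NNReal := fun ω => (η ω / c).toNNReal with hρ
  have hρm : Measurable ρ := (hη.div_const c).real_toNNReal
  have hρr : ∀ ω, ((ρ ω : NNReal) : ℝ) = η ω / c := fun ω =>
    Real.coe_toNNReal _ (div_nonneg (h0 ω) hcpos.le)
  set Q : Measure Ω := P.withDensity (fun ω => (ρ ω : ℝ≥0∞)) with hQ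
  have hQp : IsProbabilityMeasure Q := by
    constructor
    rw [hQ, withDensity_apply _ MeasurableSet.univ, Measure.restrict_univ]
    have : ∫⁻ ω, (ρ ω : ℝ≥0∞) ∂P = ENNReal.ofReal (∫ ω, η ω / c ∂P) := by
      rw [ofReal_integral_eq_lintegral_ofReal (hi.div_const c)
        (Eventually.of_forall fun ω => div_nonneg (h0 ω) hcpos.le)]
      rfl
    rw [this, integral_div, ← hc, div_self hz]
    simp
  have hQint : ∀ g : Ω → ℂ, ∫ ω, g ω ∂Q = (c : ℂ)⁻¹ * ∫ ω, (η ω : ℂ) * g ω ∂P := by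
    intro g
    rw [hQ, integral_withDensity_eq_integral_smul hρm, ← integral_const_mul]
    congr 1
    ext ω
    rw [NNReal.smul_def, hρr, Complex.real_smul]
    push_cast
    field_simp
  have hQintR : ∀ g : Ω → ℝ, ∫ ω, g ω ∂Q = c⁻¹ * ∫ ω, g ω * η ω ∂P := by
    intro g
    rw [hQ, integral_withDensity_eq_integral_smul hρm, ← integral_const_mul]
    congr 1
    ext ω
    rw [NNReal.smul_def, hρr, smul_eq_mul]
    field_simp
  have hmap : ∀ n, IsProbabilityMeasure (Q.map (X n)) := fun n =>
    Measure.isProbabilityMeasure_map (hX n).aemeasurable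
  let ν : ℕ → ProbabilityMeasure ℝ := fun n => ⟨Q.map (X n), hmap n⟩
  let ν' : ProbabilityMeasure ℝ := ⟨κ ∘ₘ Q, inferInstance⟩
  have hconv : Tendsto ν atTop (𝓝 ν') := by
    apply tendsto_of_cdf_dense hD
    intro t ht
    have e1 : ∀ n, (Q.map (X n)).real (Set.Iic t)
        = c⁻¹ * ∫ ω, ({ω' | X n ω' ≤ t}.indicator (fun _ => (1 : ℝ)) ω) * η ω ∂P := by
      intro n
      rw [← hQintR, integral_indicator_const _ (measurableSet_le (hX n) measurable_const),
        smul_eq_mul, mul_one, map_measureReal_apply (hX n) measurableSet_Iic]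
      rfl
    have e2 : (κ ∘ₘ Q).real (Set.Iic t) = c⁻¹ * ∫ ω, (κ ω (Set.Iic t)).toReal * η ω ∂P := by
      rw [← hQintR, measureReal_def, Measure.bind_apply measurableSet_Iic κ.aemeasurable,
        integral_toReal (κ.measurable_coe measurableSet_Iic).aemeasurable
          (Eventually.of_forall fun ω => measure_lt_top _ _)]
    simp only [ν, ν', ProbabilityMeasure.coe_mk]
    simp_rw [e1, e2]
    exact (h t ht η hi).const_mul _
  have := (ProbabilityMeasure.tendsto_iff_forall_integral_rclike_tendsto ℂ).1 hconv f
  simp only [ν, ν', ProbabilityMeasure.coe_mk] at this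
  have e3 : ∀ n, ∫ x, f x ∂(Q.map (X n)) = (c : ℂ)⁻¹ * ∫ ω, (η ω : ℂ) * f (X n ω) ∂P := by
    intro n
    rw [integral_map (hX n).aemeasurable f.continuous.aestronglyMeasurable, hQint]
  have e4 : ∫ x, f x ∂(κ ∘ₘ Q) = (c : ℂ)⁻¹ * ∫ ω, (η ω : ℂ) * (∫ x, f x ∂(κ ω)) ∂P := by
    have hfi : Integrable (fun p : Ω × ℝ => f p.2) (Q ⊗ₘ κ) :=
      Integrable.of_bound (f.continuous.measurable.comp measurable_snd).aestronglyMeasurable ‖f‖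
        (Eventually.of_forall fun p => f.norm_coe_le_norm _)
    rw [← hQint, ← Measure.snd_compProd, Measure.snd,
      integral_map measurable_snd.aemeasurable f.continuous.aestronglyMeasurable,
      Measure.integral_compProd hfi]
  simp_rw [e3, e4] at this
  have := this.const_mul (c : ℂ)
  have hcc : (c : ℂ) ≠ 0 := by exact_mod_cast hz
  simpa [← mul_assoc, mul_inv_cancel₀ hcc] using this

/-- Weak convergence relative to bounded complex weights. -/
lemma weak_complex (P : Measure Ω) [IsProbabilityMeasure P]
    (X : ℕ → Ω → ℝ) (hX : ∀ n, Measurable (X n)) (κ : Kernel Ω ℝ) [IsMarkovKernel κ]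
    {D : Set ℝ} (hD : Dense D)
    (h : ∀ t ∈ D, ∀ η : Ω → ℝ, Integrable η P →
      Tendsto (fun n => ∫ ω, ({ω' | X n ω' ≤ t}.indicator (fun _ => (1 : ℝ)) ω) * η ω ∂P)
        atTop (𝓝 (∫ ω, (κ ω (Set.Iic t)).toReal * η ω ∂P)))
    (W : Ω → ℂ) (hW : Measurable W) (hW1 : ∀ ω, ‖W ω‖ ≤ 1)
    (f : ℝ →ᵇ ℂ) :
    Tendsto (fun n => ∫ ω, W ω * f (X n ω) ∂P) atTop
      (𝓝 (∫ ω, W ω * (∫ x, f x ∂(κ ω)) ∂P)) := by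
  have main := weak_nonneg P X hX κ hD h
  -- integrability of bounded functions
  have bint : ∀ (g : Ω → ℂ), Measurable g → (∃ C, ∀ ω, ‖g ω‖ ≤ C) → Integrable g P := by
    rintro g hg ⟨C, hC⟩
    exact Integrable.of_bound hg.aestronglyMeasurable C (Eventually.of_forall hC)
  have hsplit : ∀ g : Ω → ℂ, Measurable g → (∃ C, ∀ ω, ‖g ω‖ ≤ C) →
      ∫ ω, W ω * g ω ∂P = (∫ ω, (((W ω).re + 1 : ℝ) : ℂ) * g ω ∂P) - (∫ ω, ((1 : ℝ) : ℂ) * g ω ∂P)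
        + Complex.I * ((∫ ω, (((W ω).im + 1 : ℝ) : ℂ) * g ω ∂P) - (∫ ω, ((1 : ℝ) : ℂ) * g ω ∂P)) := by
    rintro g hg ⟨C, hC⟩
    have hb : ∀ (a : Ω → ℝ), Measurable a → (∀ ω, |a ω| ≤ 2) →
        Integrable (fun ω => (a ω : ℂ) * g ω) P := by
      intro a ha ha2
      refine bint _ ((Complex.measurable_ofReal.comp ha).mul hg) ⟨2 * C, fun ω => ?_⟩
      rw [norm_mul, Complex.norm_real, Real.norm_eq_abs]
      exact mul_le_mul (ha2 ω) (hC ω) (norm_nonneg _) (by norm_num)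
    have b1 := hb (fun ω => (W ω).re + 1) ((Complex.measurable_re.comp hW).add_const 1)
      (fun ω => by
        have := (Complex.abs_re_le_norm (W ω)).trans (hW1 ω)
        rw [abs_le] at this ⊢; constructor <;> linarith)
    have b2 := hb (fun ω => (W ω).im + 1) ((Complex.measurable_im.comp hW).add_const 1)
      (fun ω => by
        have := (Complex.abs_im_le_norm (W ω)).trans (hW1 ω)
        rw [abs_le] at this ⊢; constructor <;> linarith)
    have b3 := hb (fun ω => 1) measurable_const (fun ω => by norm_num)
    rw [← integral_sub b1 b3, ← integral_sub b2 b3, ← integral_const_mul,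
      ← integral_add (by exact b1.sub b3) (by exact (b2.sub b3).const_mul _)]
    congr 1
    ext ω
    push_cast
    conv_lhs => rw [← Complex.re_add_im (W ω)]
    ring
  have hfb : ∀ x, ‖f x‖ ≤ ‖f‖ := f.norm_coe_le_norm
  have m1 : ∀ n, Measurable fun ω => f (X n ω) := fun n => f.continuous.measurable.comp (hX n)
  have m2 : Measurable fun ω => ∫ x, f x ∂(κ ω) :=
    (f.continuous.stronglyMeasurable.integral_kernel (κ := κ)).measurable
  have b2 : ∀ ω, ‖∫ x, f x ∂(κ ω)‖ ≤ ‖f‖ := fun ω => by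
    refine (norm_integral_le_of_norm_le_const (Eventually.of_forall hfb)).trans ?_
    simp
  rw [hsplit _ m2 ⟨_, b2⟩]
  simp_rw [fun n => hsplit _ (m1 n) ⟨_, fun ω => hfb (X n ω)⟩]
  have hre : ∀ ω, 0 ≤ (W ω).re + 1 := fun ω => by
    have := (Complex.abs_re_le_norm (W ω)).trans (hW1 ω)
    rw [abs_le] at this; linarith
  have him : ∀ ω, 0 ≤ (W ω).im + 1 := fun ω => by
    have := (Complex.abs_im_le_norm (W ω)).trans (hW1 ω)
    rw [abs_le] at this; linarith
  have bintR : ∀ a : Ω → ℝ, Measurable a → (∀ ω, |a ω| ≤ 2) → Integrable a P := by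
    intro a ha ha2
    exact Integrable.of_bound ha.aestronglyMeasurable 2 (Eventually.of_forall ha2)
  have t1 := main (fun ω => (W ω).re + 1) ((Complex.measurable_re.comp hW).add_const 1) hre
    (bintR _ ((Complex.measurable_re.comp hW).add_const 1) (fun ω => by
        have := (Complex.abs_re_le_norm (W ω)).trans (hW1 ω)
        rw [abs_le] at this ⊢; constructor <;> linarith)) f
  have t2 := main (fun ω => (W ω).im + 1) ((Complex.measurable_im.comp hW).add_const 1) him
    (bintR _ ((Complex.measurable_im.comp hW).add_const 1) (fun ω => by
        have := (Complex.abs_im_le_norm (W ω)).trans (hW1 ω)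
        rw [abs_le] at this ⊢; constructor <;> linarith)) f
  have t3 := main (fun ω => 1) measurable_const (fun ω => zero_le_one)
    (integrable_const _) f
  exact (t1.sub t3).add ((t2.sub t3).const_mul _)

/-- Inductive selection of a strictly increasing sequence. -/
lemma exists_selection (Q : Finset ℕ → ℕ → Prop) (hQ : ∀ s, ∀ᶠ n in atTop, Q s n) :
    ∃ n : ℕ → ℕ, StrictMono n ∧ ∀ k, Q ((Finset.range k).image n) (n k) := by
  have h1 : ∀ s : Finset ℕ, ∃ m, Q s m ∧ ∀ x ∈ s, x < m := by
    intro s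
    have : ∀ᶠ n in atTop, ∀ x ∈ s, x < n :=
      (Finset.eventually_all s).2 fun x _ => eventually_gt_atTop x
    exact ((hQ s).and this).exists
  choose g hg1 hg2 using h1
  let F : ℕ → Finset ℕ := fun k => Nat.rec ∅ (fun _ s => insert (g s) s) k
  have hF : ∀ k, F (k + 1) = insert (g (F k)) (F k) := fun k => rfl
  have hFi : ∀ k, F k = (Finset.range k).image (fun i => g (F i)) := by
    intro k
    induction k with
    | zero => rfl
    | succ k ih => rw [hF, Finset.range_add_one, Finset.image_insert, ← ih]
  refine ⟨fun k => g (F k), strictMono_nat_of_lt_succ fun k => ?_, fun k => ?_⟩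
  · apply hg2
    rw [hF]
    exact Finset.mem_insert_self _ _
  · rw [← hFi]
    exact hg1 _

/-- The centered characteristic function. -/
noncomputable def cfn (ν : Measure ℝ) (a u : ℝ) : ℂ :=
  Complex.exp (-(u * a) * Complex.I) * charFun ν u

lemma tendsto_inv_sqrt_mul (t : ℝ) :
    Tendsto (fun N : ℕ => (Real.sqrt N)⁻¹ * t) atTop (𝓝 0) := by
  rw [← zero_mul t]
  exact .mul_const t (tendsto_inv_atTop_zero.comp <| Real.tendsto_sqrt_atTop.comp <|
      tendsto_natCast_atTop_atTop)

lemma memLp_two_of_lintegral (ν : Measure ℝ)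
    (h : ∫⁻ x, ENNReal.ofReal (x ^ 2) ∂ν < ⊤) : MemLp (fun x : ℝ => x) 2 ν := by
  rw [memLp_two_iff_integrable_sq (by fun_prop)]
  refine ⟨by fun_prop, ?_⟩
  rw [hasFiniteIntegral_iff_ofReal (Eventually.of_forall fun x => sq_nonneg x)]
  exact h

/-- The pointwise central limit theorem in terms of characteristic functions. -/
lemma clt_pointwise (ν : Measure ℝ) [IsProbabilityMeasure ν]
    (h : ∫⁻ x, ENNReal.ofReal (x ^ 2) ∂ν < ⊤) (t : ℝ) :
    Tendsto (fun N : ℕ => (cfn ν (∫ x, x ∂ν) ((Real.sqrt N)⁻¹ * t)) ^ N) atTop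
      (𝓝 (Real.exp (-(variance (fun x : ℝ => x) ν) * t ^ 2 / 2) : ℂ)) := by
  have hL := memLp_two_of_lintegral ν h
  have hInt : Integrable (fun x : ℝ => x) ν := hL.integrable (by norm_num)
  set a := ∫ x, x ∂ν with ha
  have hc : ∀ u : ℝ, cfn ν a u = ∫ x, Complex.exp ((u * (x - a) : ℝ) * Complex.I) ∂ν := by
    intro u
    rw [cfn, charFun_apply_real, ← integral_const_mul]
    congr 1
    ext x
    rw [← Complex.exp_add]
    congr 1
    push_cast
    ring
  by_cases hv : variance (fun x : ℝ => x) ν = 0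
  · have h0 := ae_eq_integral_of_variance_eq_zero hL hv
    have : ∀ u, cfn ν a u = 1 := by
      intro u
      rw [hc]
      have : ∫ x, Complex.exp ((u * (x - a) : ℝ) * Complex.I) ∂ν = ∫ x, (1 : ℂ) ∂ν := by
        apply integral_congr_ae
        filter_upwards [h0] with x hx
        rw [show x = a from hx]
        simp
      rw [this]
      simp
    simp [this, hv]
  · have hvpos : 0 < variance (fun x : ℝ => x) ν :=
      lt_of_le_of_ne (variance_nonneg _ _) (Ne.symm hv)
    set v := variance (fun x : ℝ => x) ν with hvdef
    have hsv : Real.sqrt v ≠ 0 := (Real.sqrt_pos.2 hvpos).ne'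
    have key := tendsto_charFun_inv_sqrt_mul_pow (P := ν) (X := fun x : ℝ => (x - a) / Real.sqrt v)
      (by fun_prop) (by
        rw [integral_div, integral_sub hInt (integrable_const _)]
        simp [ha]) (by
        have : ((fun x : ℝ => (x - a) / Real.sqrt v) ^ 2) = fun x => (x - a) ^ 2 / v := by
          ext x
          simp [div_pow, Real.sq_sqrt hvpos.le]
        rw [this, integral_div]
        rw [div_eq_one_iff_eq hv, hvdef, variance_eq_integral (by fun_prop)]) (t * Real.sqrt v)
    have e1 : ∀ N : ℕ, charFun (ν.map (fun x : ℝ => (x - a) / Real.sqrt v))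
        ((Real.sqrt N)⁻¹ * (t * Real.sqrt v)) = cfn ν a ((Real.sqrt N)⁻¹ * t) := by
      intro N
      rw [hc, charFun_apply_real, integral_map (by fun_prop) (by fun_prop)]
      congr 1
      ext x
      congr 2
      rw [← Complex.ofReal_mul]
      congr 1
      field_simp
    simp_rw [e1] at key
    convert key using 2
    rw [Complex.ofReal_exp]
    congr 1
    rw [← Complex.ofReal_pow, mul_pow, Real.sq_sqrt hvpos.le]
    push_cast
    ring

lemma one_sub_normSq_charFun (ν : Measure ℝ) [IsProbabilityMeasure ν] (u : ℝ) :
    1 - ‖charFun ν u‖ ^ 2 = ∫ p : ℝ × ℝ, (1 - Real.cos (u * (p.1 - p.2))) ∂(ν.prod ν) := by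
  have h1 : ((‖charFun ν u‖ ^ 2 : ℝ) : ℂ)
      = ∫ p : ℝ × ℝ, Complex.exp ((u * (p.1 - p.2) : ℝ) * Complex.I) ∂(ν.prod ν) := by
    have : ((‖charFun ν u‖ ^ 2 : ℝ) : ℂ) = charFun ν u * charFun ν (-u) := by
      rw [charFun_neg, Complex.mul_conj, Complex.normSq_eq_norm_sq]
    rw [this, charFun_apply_real, charFun_apply_real, ← integral_prod_mul]
    congr 1
    ext p
    rw [← Complex.exp_add]
    congr 1
    push_cast
    ring
  have hi : Integrable (fun p : ℝ × ℝ => Complex.exp ((u * (p.1 - p.2) : ℝ) * Complex.I))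
      (ν.prod ν) := by
    refine Integrable.of_bound (by fun_prop) 1 (Eventually.of_forall fun p => ?_)
    rw [Complex.norm_exp_ofReal_mul_I]
  have h2 : ‖charFun ν u‖ ^ 2 = ∫ p : ℝ × ℝ, Real.cos (u * (p.1 - p.2)) ∂(ν.prod ν) := by
    have h3 := congrArg Complex.re h1
    rw [Complex.ofReal_re] at h3
    rw [h3, ← Complex.reCLM_apply, ← Complex.reCLM.integral_comp_comm hi]
    congr 1
    ext p
    rw [Complex.reCLM_apply, Complex.exp_ofReal_mul_I_re]
  rw [integral_sub (integrable_const _), ← h2]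
  · simp
  · refine Integrable.of_bound (by fun_prop) 1 (Eventually.of_forall fun p => ?_)
    exact Real.abs_cos_le_one _

lemma lintegral_prod_sq_eq_top (ν : Measure ℝ) [IsProbabilityMeasure ν]
    (h : ∫⁻ x, ENNReal.ofReal (x ^ 2) ∂ν = ⊤) :
    ∫⁻ p : ℝ × ℝ, ENNReal.ofReal ((p.1 - p.2) ^ 2) ∂(ν.prod ν) = ⊤ := by
  rw [lintegral_prod_symm' _ (by fun_prop)]
  have : ∀ y : ℝ, ∫⁻ x, ENNReal.ofReal ((x - y) ^ 2) ∂ν = ⊤ := by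
    intro y
    by_contra hne
    have h1 : ∫⁻ x, ENNReal.ofReal (x ^ 2) ∂ν
        ≤ ∫⁻ x, (2 * ENNReal.ofReal ((x - y) ^ 2) + ENNReal.ofReal (2 * y ^ 2)) ∂ν := by
      apply lintegral_mono
      intro x
      have e2 : (2 : ℝ≥0∞) = ENNReal.ofReal 2 := by simp
      beta_reduce
      rw [e2, ← ENNReal.ofReal_mul (by norm_num), ← ENNReal.ofReal_add (by positivity) (by positivity)]
      apply ENNReal.ofReal_le_ofReal
      nlinarith [sq_nonneg (x - y - y)]
    rw [h, lintegral_add_right _ (by fun_prop), lintegral_const_mul _ (by fun_prop),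
      lintegral_const, measure_univ, mul_one] at h1
    exact absurd h1 (not_le.2 (ENNReal.add_lt_top.2
      ⟨ENNReal.mul_lt_top (by simp) (lt_top_iff_ne_top.2 hne), ENNReal.ofReal_lt_top⟩))
  simp [this]

lemma divergence_pointwise (ν : Measure ℝ) [IsProbabilityMeasure ν]
    (h : ∫⁻ x, ENNReal.ofReal (x ^ 2) ∂ν = ⊤) (t : ℝ) (ht : t ≠ 0) :
    Tendsto (fun N : ℕ => ‖charFun ν ((Real.sqrt N)⁻¹ * t)‖ ^ N) atTop (𝓝 0) := by
  set u : ℕ → ℝ := fun N => (Real.sqrt N)⁻¹ * t with hu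
  have hnn : ∀ (N : ℕ) (p : ℝ × ℝ), 0 ≤ (N : ℝ) * (1 - Real.cos (u N * (p.1 - p.2))) := fun N p =>
    mul_nonneg (Nat.cast_nonneg _) (sub_nonneg.2 (Real.cos_le_one _))
  have hreal : ∀ N : ℕ, ENNReal.ofReal (N * (1 - ‖charFun ν (u N)‖ ^ 2))
      = ∫⁻ p : ℝ × ℝ, ENNReal.ofReal (N * (1 - Real.cos (u N * (p.1 - p.2)))) ∂(ν.prod ν) := by
    intro N
    rw [one_sub_normSq_charFun, ← integral_const_mul,
      ofReal_integral_eq_lintegral_ofReal _ (Eventually.of_forall (hnn N))]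
    refine Integrable.of_bound (by fun_prop) (N * 2) (Eventually.of_forall fun p => ?_)
    rw [Real.norm_of_nonneg (hnn N p)]
    gcongr
    linarith [Real.neg_one_le_cos (u N * (p.1 - p.2))]
  have htop : ∫⁻ p : ℝ × ℝ, liminf (fun N : ℕ =>
      ENNReal.ofReal (N * (1 - Real.cos (u N * (p.1 - p.2))))) atTop ∂(ν.prod ν) = ⊤ := by
    have hcpos : 0 < 2 / Real.pi ^ 2 * t ^ 2 := by positivity
    rw [eq_top_iff]
    calc (⊤ : ℝ≥0∞) = ENNReal.ofReal (2 / Real.pi ^ 2 * t ^ 2) *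
          ∫⁻ p : ℝ × ℝ, ENNReal.ofReal ((p.1 - p.2) ^ 2) ∂(ν.prod ν) := by
          rw [lintegral_prod_sq_eq_top ν h, ENNReal.mul_top]
          simpa using hcpos
      _ = ∫⁻ p : ℝ × ℝ, ENNReal.ofReal (2 / Real.pi ^ 2 * t ^ 2) *
          ENNReal.ofReal ((p.1 - p.2) ^ 2) ∂(ν.prod ν) := by
          rw [lintegral_const_mul _ (by fun_prop)]
      _ ≤ _ := by
          apply lintegral_mono
          intro p
          refine le_liminf_of_le (by isBoundedDefault) ?_
          have hlim : Tendsto (fun N => |u N * (p.1 - p.2)|) atTop (𝓝 0) := by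
            have := ((tendsto_inv_sqrt_mul t).mul_const (p.1 - p.2)).abs
            rw [zero_mul, abs_zero] at this
            exact this
          filter_upwards [hlim.eventually (gt_mem_nhds Real.pi_pos), eventually_gt_atTop 0]
            with N hN hN0
          rw [← ENNReal.ofReal_mul hcpos.le]
          apply ENNReal.ofReal_le_ofReal
          have hq := Real.cos_le_one_sub_mul_cos_sq hN.le
          have hN' : (0 : ℝ) < N := by exact_mod_cast hN0
          have e : (N : ℝ) * (2 / Real.pi ^ 2 * (u N * (p.1 - p.2)) ^ 2)
              = 2 / Real.pi ^ 2 * t ^ 2 * (p.1 - p.2) ^ 2 := by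
            simp only [hu, mul_pow, inv_pow, Real.sq_sqrt hN'.le]
            field_simp
          rw [← e]
          gcongr
          linarith
  have hfatou : liminf (fun N : ℕ => ENNReal.ofReal (N * (1 - ‖charFun ν (u N)‖ ^ 2))) atTop = ⊤ := by
    rw [eq_top_iff, ← htop]
    simp_rw [hreal]
    exact lintegral_liminf_le (fun N => by fun_prop)
  have hT : Tendsto (fun N : ℕ => ENNReal.ofReal (N * (1 - ‖charFun ν (u N)‖ ^ 2))) atTop (𝓝 ⊤) :=
    tendsto_of_le_liminf_of_limsup_le hfatou.ge le_top
  have hR : Tendsto (fun N : ℕ => (N : ℝ) * (1 - ‖charFun ν (u N)‖ ^ 2)) atTop atTop := by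
    rw [tendsto_atTop]
    intro b
    filter_upwards [hT.eventually (lt_mem_nhds (ENNReal.ofReal_lt_top (r := b)))] with N hN
    by_contra hlt
    exact absurd hN (not_lt.2 (ENNReal.ofReal_le_ofReal (not_le.1 hlt).le))
  have hsq : Tendsto (fun N : ℕ => (‖charFun ν (u N)‖ ^ N) ^ 2) atTop (𝓝 0) := by
    refine squeeze_zero (fun N => sq_nonneg _) (fun N => ?_)
      (Real.tendsto_exp_neg_atTop_nhds_zero.comp hR)
    simp only [Function.comp]
    rw [← pow_mul, mul_comm, pow_mul]
    have h1 : ‖charFun ν (u N)‖ ^ 2 ≤ Real.exp (-(1 - ‖charFun ν (u N)‖ ^ 2)) := by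
      have := Real.add_one_le_exp (-(1 - ‖charFun ν (u N)‖ ^ 2))
      linarith
    calc (‖charFun ν (u N)‖ ^ 2) ^ N ≤ (Real.exp (-(1 - ‖charFun ν (u N)‖ ^ 2))) ^ N := by
          gcongr
      _ = _ := by
          rw [← Real.exp_nat_mul]
          congr 1
          ring
  have := hsq.sqrt
  simpa [Real.sqrt_sq (pow_nonneg (norm_nonneg _) _)] using this

/-- Abbreviation for `exp (i u x)`. -/
noncomputable def ee (u x : ℝ) : ℂ := Complex.exp ((u * x : ℝ) * Complex.I)

lemma norm_ee (u x : ℝ) : ‖ee u x‖ = 1 := Complex.norm_exp_ofReal_mul_I _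

lemma continuous_ee_left (x : ℝ) : Continuous fun u => ee u x := by
  unfold ee; fun_prop

lemma continuous_ee_right (u : ℝ) : Continuous fun x => ee u x := by
  unfold ee; fun_prop

lemma ee_add_left (u v x : ℝ) : ee (u + v) x = ee u x * ee v x := by
  unfold ee
  rw [← Complex.exp_add]
  congr 1
  push_cast
  ring

lemma norm_ee_sub_one_le (u x : ℝ) : ‖ee u x - 1‖ ≤ min 2 (|u| * |x|) := by
  apply le_min
  · calc ‖ee u x - 1‖ ≤ ‖ee u x‖ + ‖(1 : ℂ)‖ := norm_sub_le _ _
      _ = 2 := by rw [norm_ee, norm_one]; norm_num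
  · unfold ee
    have := Real.norm_exp_I_mul_ofReal_sub_one_le (x := u * x)
    rw [mul_comm, ← abs_mul]
    exact this

lemma charFun_eq_ee (ν : Measure ℝ) (u : ℝ) : charFun ν u = ∫ x, ee u x ∂ν := by
  rw [charFun_apply_real]
  congr 1
  ext x
  unfold ee
  push_cast
  rfl

/-- `x ↦ exp (i u x)` as a bounded continuous function. -/
noncomputable def eeB (u : ℝ) : ℝ →ᵇ ℂ :=
  BoundedContinuousFunction.ofNormedAddCommGroup (fun x => ee u x) (continuous_ee_right u) 1
    (fun x => (norm_ee u x).le)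

/-- `x ↦ min 2 (δ |x|)` as a bounded continuous function. -/
noncomputable def minB (δ : ℝ) (hδ : 0 ≤ δ) : ℝ →ᵇ ℂ :=
  BoundedContinuousFunction.ofNormedAddCommGroup (fun x => ((min 2 (δ * |x|) : ℝ) : ℂ))
    (by fun_prop) 2
    (fun x => by
      rw [Complex.norm_real, Real.norm_of_nonneg (le_min (by norm_num) (by positivity))]
      exact min_le_left _ _)

/-- Stable convergence of `X n` to the random measure `κ`. -/
def StableConv (P : Measure Ω) (X : ℕ → Ω → ℝ) (κ : Kernel Ω ℝ) : Prop :=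
  ∀ W : Ω → ℂ, Measurable W → (∀ ω, ‖W ω‖ ≤ 1) → ∀ f : ℝ →ᵇ ℂ,
    Tendsto (fun n => ∫ ω, W ω * f (X n ω) ∂P) atTop (𝓝 (∫ ω, W ω * (∫ x, f x ∂(κ ω)) ∂P))

section swap

variable {P : Measure Ω} [IsProbabilityMeasure P] {X : ℕ → Ω → ℝ} {κ : Kernel Ω ℝ}
  [IsMarkovKernel κ]

lemma measurable_charFun_kernel (κ : Kernel Ω ℝ) [IsMarkovKernel κ] (u : ℝ) :
    Measurable fun ω => charFun (κ ω) u := by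
  simp_rw [charFun_eq_ee]
  exact ((continuous_ee_right u).stronglyMeasurable.integral_kernel (κ := κ)).measurable

lemma measurable_ee {Z : Ω → ℝ} (hZ : Measurable Z) (u : ℝ) : Measurable fun ω => ee u (Z ω) :=
  (continuous_ee_right u).measurable.comp hZ

lemma tendsto_min_integral (P : Measure Ω) [IsProbabilityMeasure P] (κ : Kernel Ω ℝ)
    [IsMarkovKernel κ] :
    Tendsto (fun δ : ℝ => ∫ ω, ∫ x, min 2 (|δ| * |x|) ∂(κ ω) ∂P) (𝓝 0) (𝓝 0) := by
  have hb : ∀ δ x : ℝ, ‖min 2 (|δ| * |x|)‖ ≤ 2 := fun δ x => by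
    rw [Real.norm_of_nonneg (le_min (by norm_num) (by positivity))]
    exact min_le_left _ _
  have h1 : ∀ ω, Tendsto (fun δ : ℝ => ∫ x, min 2 (|δ| * |x|) ∂(κ ω)) (𝓝 0) (𝓝 0) := by
    intro ω
    have key : Tendsto (fun δ : ℝ => ∫ x, min 2 (|δ| * |x|) ∂(κ ω)) (𝓝 0)
        (𝓝 (∫ _, (0 : ℝ) ∂(κ ω))) := by
      refine tendsto_integral_filter_of_dominated_convergence (fun _ => 2)
        (Eventually.of_forall fun δ => by fun_prop)
        (Eventually.of_forall fun δ => Eventually.of_forall fun x => hb δ x)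
        (integrable_const _) (Eventually.of_forall fun x => ?_)
      have hc : Continuous fun δ : ℝ => min 2 (|δ| * |x|) := by fun_prop
      have := hc.tendsto 0
      simpa using this
    rwa [integral_zero] at key
  have key : Tendsto (fun δ : ℝ => ∫ ω, ∫ x, min 2 (|δ| * |x|) ∂(κ ω) ∂P) (𝓝 0)
      (𝓝 (∫ _, (0 : ℝ) ∂P)) := by
    refine tendsto_integral_filter_of_dominated_convergence (fun _ => 2)
      (Eventually.of_forall fun δ => ?_)
      (Eventually.of_forall fun δ => Eventually.of_forall fun ω => ?_)
      (integrable_const _) (Eventually.of_forall h1)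
    · have hc : Continuous fun x : ℝ => min 2 (|δ| * |x|) := by fun_prop
      exact (hc.stronglyMeasurable.integral_kernel (κ := κ)).aestronglyMeasurable
    · refine (norm_integral_le_of_norm_le_const (Eventually.of_forall (hb δ))).trans ?_
      simp
  rwa [integral_zero] at key

lemma integrable_of_meas_bound {E : Type*} [NormedAddCommGroup E] [MeasurableSpace E] [BorelSpace E]
    [SecondCountableTopology E]
    {g : Ω → E} (hg : Measurable g) (C : ℝ) (h : ∀ ω, ‖g ω‖ ≤ C) : Integrable g P :=
  Integrable.of_bound hg.aestronglyMeasurable C (Eventually.of_forall h)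

/-- Uniform equicontinuity at zero (tightness). -/
lemma tight_zero (hX : ∀ n, Measurable (X n)) (H : StableConv P X κ) :
    Tendsto (fun q : ℕ × ℝ => ∫ ω, ‖ee q.2 (X q.1 ω) - 1‖ ∂P) (atTop ×ˢ 𝓝 0) (𝓝 0) := by
  rw [Metric.tendsto_nhds]
  intro ε hε
  have h1 := (tendsto_min_integral P κ).eventually (gt_mem_nhds hε)
  obtain ⟨r, hr, hball⟩ := Metric.eventually_nhds_iff.1 h1
  set δ := r / 2 with hδ
  have hδ0 : 0 < δ := by positivity
  have h2 : ∫ ω, ∫ x, min 2 (δ * |x|) ∂(κ ω) ∂P < ε := by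
    have := hball (y := δ) (by rw [Real.dist_eq, sub_zero, abs_of_pos hδ0]; linarith)
    simpa [abs_of_pos hδ0] using this
  have h3 := H (fun _ => 1) measurable_const (fun _ => by simp) (minB δ hδ0.le)
  simp only [minB, BoundedContinuousFunction.coe_ofNormedAddCommGroup, one_mul,
    integral_complex_ofReal] at h3
  have h4 : Tendsto (fun n => ∫ ω, min 2 (δ * |X n ω|) ∂P) atTop
      (𝓝 (∫ ω, ∫ x, min 2 (δ * |x|) ∂(κ ω) ∂P)) := by
    have := (Complex.continuous_re.tendsto _).comp h3
    simpa [Function.comp_def] using this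
  have h5 := h4.eventually (gt_mem_nhds h2)
  have h6 : ∀ᶠ u : ℝ in 𝓝 0, |u| < δ := by
    have : Tendsto (fun u : ℝ => |u|) (𝓝 0) (𝓝 0) := by
      simpa using (continuous_abs.tendsto (0 : ℝ))
    exact this.eventually (gt_mem_nhds hδ0)
  filter_upwards [h5.prod_mk h6] with q hq
  rw [Real.dist_eq, sub_zero, abs_of_nonneg (integral_nonneg fun _ => norm_nonneg _)]
  refine lt_of_le_of_lt (integral_mono ?_ ?_ fun ω => ?_) hq.1
  · refine integrable_of_meas_bound (((measurable_ee (hX _) _).sub_const 1).norm) 2 fun ω => ?_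
    rw [norm_norm]
    exact (norm_ee_sub_one_le _ _).trans (min_le_left _ _)
  · refine integrable_of_meas_bound (measurable_const.min ((hX _).abs.const_mul _)) 2 fun ω => ?_
    rw [Real.norm_of_nonneg (le_min (by norm_num) (by positivity))]
    exact min_le_left _ _
  · refine (norm_ee_sub_one_le _ _).trans ?_
    exact min_le_min_left _ (mul_le_mul_of_nonneg_right hq.2.le (abs_nonneg _))

lemma charFun_kernel_cont (P : Measure Ω) [IsProbabilityMeasure P] (κ : Kernel Ω ℝ)
    [IsMarkovKernel κ] (u₀ : ℝ) :
    Tendsto (fun u => ∫ ω, ‖charFun (κ ω) u - charFun (κ ω) u₀‖ ∂P) (𝓝 u₀) (𝓝 0) := by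
  have : (0 : ℝ) = ∫ ω, (0 : ℝ) ∂P := by simp
  rw [this]
  refine tendsto_integral_filter_of_dominated_convergence (fun _ => 2)
    (Eventually.of_forall fun u => ?_)
    (Eventually.of_forall fun u => Eventually.of_forall fun ω => ?_)
    (integrable_const _) (Eventually.of_forall fun ω => ?_)
  · exact ((measurable_charFun_kernel κ u).sub
      (measurable_charFun_kernel κ u₀)).norm.aestronglyMeasurable
  · rw [norm_norm]
    refine (norm_sub_le _ _).trans ?_
    linarith [norm_charFun_le_one (μ := κ ω) u, norm_charFun_le_one (μ := κ ω) u₀]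
  · have hc : Continuous fun u => ‖charFun (κ ω) u - charFun (κ ω) u₀‖ :=
      (continuous_charFun.sub continuous_const).norm
    have := hc.tendsto u₀
    simpa using this

/-- Convergence near zero, uniform in the weight. -/
lemma near_zero (hX : ∀ n, Measurable (X n)) (H : StableConv P X κ) :
    Tendsto (fun q : ℕ × ℝ => ∫ ω, ‖ee q.2 (X q.1 ω) - charFun (κ ω) q.2‖ ∂P)
      (atTop ×ˢ 𝓝 0) (𝓝 0) := by
  have h1 := (tight_zero hX H).add ((charFun_kernel_cont P κ 0).comp tendsto_snd)
  rw [add_zero] at h1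
  refine squeeze_zero (fun q => integral_nonneg fun _ => norm_nonneg _) (fun q => ?_) h1
  simp only [Function.comp]
  have i1 : Integrable (fun ω => ‖ee q.2 (X q.1 ω) - 1‖) P := by
    refine integrable_of_meas_bound (((measurable_ee (hX _) _).sub_const 1).norm) 2 fun ω => ?_
    rw [norm_norm]
    exact (norm_ee_sub_one_le _ _).trans (min_le_left _ _)
  have i2 : Integrable (fun ω => ‖charFun (κ ω) q.2 - charFun (κ ω) 0‖) P := by
    refine integrable_of_meas_bound (((measurable_charFun_kernel κ _).sub
      (measurable_charFun_kernel κ _)).norm) 2 fun ω => ?_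
    rw [norm_norm]
    refine (norm_sub_le _ _).trans ?_
    linarith [norm_charFun_le_one (μ := κ ω) q.2, norm_charFun_le_one (μ := κ ω) 0]
  rw [← integral_add i1 i2]
  refine integral_mono_of_nonneg (Eventually.of_forall fun _ => norm_nonneg _) (i1.add i2)
    (Eventually.of_forall fun ω => ?_)
  beta_reduce
  have e0 : charFun (κ ω) 0 = 1 := by simp
  rw [e0]
  have := norm_sub_le (ee q.2 (X q.1 ω) - 1) (charFun (κ ω) q.2 - 1)
  rwa [sub_sub_sub_cancel_right] at this

/-- Joint convergence for a continuous family of weights. -/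
lemma joint_conv (hX : ∀ n, Measurable (X n)) (H : StableConv P X κ)
    (W : ℝ → Ω → ℂ) (hWm : ∀ u, Measurable (W u)) (hW1 : ∀ u ω, ‖W u ω‖ ≤ 1)
    (hWc : ∀ ω, Continuous fun u => W u ω) (u₀ : ℝ) :
    Tendsto (fun q : ℕ × ℝ => ∫ ω, W q.2 ω * (ee q.2 (X q.1 ω) - charFun (κ ω) q.2) ∂P)
      (atTop ×ˢ 𝓝 u₀) (𝓝 0) := by
  have t1 : Tendsto (fun u => ∫ ω, ‖W u ω - W u₀ ω‖ ∂P) (𝓝 u₀) (𝓝 0) := by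
    have : (0 : ℝ) = ∫ ω, (0 : ℝ) ∂P := by simp
    rw [this]
    refine tendsto_integral_filter_of_dominated_convergence (fun _ => 2)
      (Eventually.of_forall fun u => ((hWm u).sub (hWm u₀)).norm.aestronglyMeasurable)
      (Eventually.of_forall fun u => Eventually.of_forall fun ω => ?_)
      (integrable_const _) (Eventually.of_forall fun ω => ?_)
    · rw [norm_norm]
      refine (norm_sub_le _ _).trans ?_
      linarith [hW1 u ω, hW1 u₀ ω]
    · have hc : Continuous fun u => ‖W u ω - W u₀ ω‖ := ((hWc ω).sub continuous_const).norm
      have := hc.tendsto u₀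
      simpa using this
  have t2 : Tendsto (fun q : ℕ × ℝ => ∫ ω, ‖ee (q.2 - u₀) (X q.1 ω) - 1‖ ∂P)
      (atTop ×ˢ 𝓝 u₀) (𝓝 0) := by
    have hsub : Tendsto (fun u : ℝ => u - u₀) (𝓝 u₀) (𝓝 0) := by
      have hc : Continuous fun u : ℝ => u - u₀ := by fun_prop
      simpa using hc.tendsto u₀
    have hf : Tendsto (fun q : ℕ × ℝ => (q.1, q.2 - u₀)) (atTop ×ˢ 𝓝 u₀) (atTop ×ˢ 𝓝 0) :=
      tendsto_fst.prodMk (hsub.comp tendsto_snd)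
    have := (tight_zero hX H).comp hf
    exact this
  have t3 := charFun_kernel_cont P κ u₀
  have t4 : Tendsto (fun n => ‖∫ ω, W u₀ ω * (ee u₀ (X n ω) - charFun (κ ω) u₀) ∂P‖) atTop
      (𝓝 0) := by
    have h1 := H (W u₀) (hWm u₀) (hW1 u₀) (eeB u₀)
    simp only [eeB, BoundedContinuousFunction.coe_ofNormedAddCommGroup, ← charFun_eq_ee] at h1
    have h2 := (h1.sub_const (∫ ω, W u₀ ω * charFun (κ ω) u₀ ∂P)).norm
    rw [sub_self, norm_zero] at h2
    refine h2.congr fun n => ?_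
    rw [← integral_sub]
    · simp_rw [mul_sub]
    · refine integrable_of_meas_bound ((hWm u₀).mul (measurable_ee (hX n) _)) 1 fun ω => ?_
      rw [norm_mul, norm_ee, mul_one]
      exact hW1 _ _
    · refine integrable_of_meas_bound ((hWm u₀).mul (measurable_charFun_kernel κ _)) 1 fun ω => ?_
      rw [norm_mul]
      exact mul_le_one₀ (hW1 _ _) (norm_nonneg _) (norm_charFun_le_one _)
  have tot := ((((t1.comp tendsto_snd).const_mul 2).add t2).add
    (t3.comp tendsto_snd)).add (t4.comp (tendsto_fst (f := atTop) (g := 𝓝 u₀)))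
  simp only [mul_zero, add_zero] at tot
  refine squeeze_zero_norm (fun q => ?_) tot
  obtain ⟨n, u⟩ := q
  simp only [Function.comp]
  have i1 : Integrable (fun ω => ‖W u ω - W u₀ ω‖) P := by
    refine integrable_of_meas_bound ((hWm u).sub (hWm u₀)).norm 2 fun ω => ?_
    rw [norm_norm]
    refine (norm_sub_le _ _).trans ?_
    linarith [hW1 u ω, hW1 u₀ ω]
  have i2 : Integrable (fun ω => ‖ee (u - u₀) (X n ω) - 1‖) P := by
    refine integrable_of_meas_bound (((measurable_ee (hX _) _).sub_const 1).norm) 2 fun ω => ?_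
    rw [norm_norm]
    exact (norm_ee_sub_one_le _ _).trans (min_le_left _ _)
  have i3 : Integrable (fun ω => ‖charFun (κ ω) u - charFun (κ ω) u₀‖) P := by
    refine integrable_of_meas_bound (((measurable_charFun_kernel κ _).sub
      (measurable_charFun_kernel κ _)).norm) 2 fun ω => ?_
    rw [norm_norm]
    refine (norm_sub_le _ _).trans ?_
    linarith [norm_charFun_le_one (μ := κ ω) u, norm_charFun_le_one (μ := κ ω) u₀]
  have iW : ∀ v, Integrable (fun ω => W v ω * (ee v (X n ω) - charFun (κ ω) v)) P := by
    intro v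
    refine integrable_of_meas_bound ((hWm v).mul ((measurable_ee (hX n) _).sub
      (measurable_charFun_kernel κ _))) (1 * 2) fun ω => ?_
    rw [norm_mul]
    refine mul_le_mul (hW1 _ _) ((norm_sub_le _ _).trans ?_) (norm_nonneg _) zero_le_one
    linarith [norm_charFun_le_one (μ := κ ω) v, norm_ee v (X n ω)]
  have i12 : Integrable (fun ω => 2 * ‖W u ω - W u₀ ω‖ + ‖ee (u - u₀) (X n ω) - 1‖) P :=
    (i1.const_mul 2).add i2
  have i123 : Integrable (fun ω => 2 * ‖W u ω - W u₀ ω‖ + ‖ee (u - u₀) (X n ω) - 1‖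
      + ‖charFun (κ ω) u - charFun (κ ω) u₀‖) P := i12.add i3
  rw [← integral_const_mul, ← integral_add (i1.const_mul 2) i2, ← integral_add i12 i3,
    ← sub_le_iff_le_add]
  refine (norm_sub_norm_le _ _).trans ?_
  rw [← integral_sub (iW u) (iW u₀)]
  refine (norm_integral_le_integral_norm _).trans ?_
  refine integral_mono ((iW u).sub (iW u₀)).norm i123 fun ω => ?_
  have hxe : ee u (X n ω) = ee (u - u₀) (X n ω) * ee u₀ (X n ω) := by
    rw [← ee_add_left, sub_add_cancel]
  have hid : W u ω * (ee u (X n ω) - charFun (κ ω) u)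
      - W u₀ ω * (ee u₀ (X n ω) - charFun (κ ω) u₀)
      = (W u ω - W u₀ ω) * (ee u (X n ω) - charFun (κ ω) u)
        + W u₀ ω * ((ee (u - u₀) (X n ω) - 1) * ee u₀ (X n ω))
        - W u₀ ω * (charFun (κ ω) u - charFun (κ ω) u₀) := by
    rw [hxe]; ring
  beta_reduce
  rw [hid]
  refine (norm_sub_le _ _).trans (add_le_add ((norm_add_le _ _).trans (add_le_add ?_ ?_)) ?_)
  · rw [norm_mul, mul_comm]
    refine mul_le_mul_of_nonneg_right ((norm_sub_le _ _).trans ?_) (norm_nonneg _)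
    linarith [norm_charFun_le_one (μ := κ ω) u, norm_ee u (X n ω)]
  · rw [norm_mul, norm_mul, norm_ee, mul_one]
    exact mul_le_of_le_one_left (norm_nonneg _) (hW1 _ _)
  · rw [norm_mul]
    exact mul_le_of_le_one_left (norm_nonneg _) (hW1 _ _)

lemma cfn_eq (ν : Measure ℝ) (a u : ℝ) : cfn ν a u = ee u (-a) * charFun ν u := by
  unfold cfn ee
  push_cast
  ring_nf

lemma ee_add_right (u x y : ℝ) : ee u (x + y) = ee u x * ee u y := by
  unfold ee
  rw [← Complex.exp_add]
  congr 1
  push_cast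
  ring

lemma norm_cfn_le (ν : Measure ℝ) [IsProbabilityMeasure ν] (a u : ℝ) : ‖cfn ν a u‖ ≤ 1 := by
  rw [cfn_eq, norm_mul, norm_ee, one_mul]
  exact norm_charFun_le_one _

lemma measurable_cfn (κ : Kernel Ω ℝ) [IsMarkovKernel κ] {X₀ : Ω → ℝ} (hX₀ : Measurable X₀)
    (u : ℝ) : Measurable fun ω => cfn (κ ω) (X₀ ω) u := by
  simp_rw [cfn_eq]
  exact (measurable_ee hX₀.neg u).mul (measurable_charFun_kernel κ u)

/-- The weights used in the swapping argument. -/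
noncomputable def WW (X : ℕ → Ω → ℝ) (κ : Kernel Ω ℝ) (X₀ : Ω → ℝ) (S : Finset ℕ) (p : ℕ)
    (u : ℝ) (ω : Ω) : ℂ :=
  (∏ l ∈ S, ee u (X l ω - X₀ ω)) * ee u (-(X₀ ω)) * (cfn (κ ω) (X₀ ω) u) ^ p

/-- One swapping term. -/
noncomputable def DD (P : Measure Ω) (X : ℕ → Ω → ℝ) (κ : Kernel Ω ℝ) (X₀ : Ω → ℝ)
    (S : Finset ℕ) (i p : ℕ) (u : ℝ) : ℂ :=
  ∫ ω, WW X κ X₀ S p u ω * (ee u (X i ω) - charFun (κ ω) u) ∂P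

lemma WW_eq (X₀ : Ω → ℝ) (S : Finset ℕ) (i p : ℕ) (u : ℝ) (ω : Ω) :
    WW X κ X₀ S p u ω * (ee u (X i ω) - charFun (κ ω) u)
      = (∏ l ∈ S, ee u (X l ω - X₀ ω)) * (ee u (X i ω - X₀ ω) - cfn (κ ω) (X₀ ω) u)
        * (cfn (κ ω) (X₀ ω) u) ^ p := by
  rw [sub_eq_add_neg (X i ω), ee_add_right, WW]
  have : cfn (κ ω) (X₀ ω) u - ee u (-(X₀ ω)) * charFun (κ ω) u = 0 := by
    rw [cfn_eq, sub_self]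
  linear_combination (∏ l ∈ S, ee u (X l ω - X₀ ω)) * (cfn (κ ω) (X₀ ω) u) ^ p * this

lemma WW_measurable (hX : ∀ n, Measurable (X n)) {X₀ : Ω → ℝ} (hX₀ : Measurable X₀)
    (S : Finset ℕ) (p : ℕ) (u : ℝ) : Measurable (WW X κ X₀ S p u) := by
  unfold WW
  refine ((Finset.measurable_fun_prod S fun l _ => ?_).mul (measurable_ee hX₀.neg u)).mul
    ((measurable_cfn κ hX₀ u).pow_const p)
  exact measurable_ee ((hX l).sub hX₀) u

lemma WW_norm (X₀ : Ω → ℝ) (S : Finset ℕ) (p : ℕ) (u : ℝ) (ω : Ω) :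
    ‖WW X κ X₀ S p u ω‖ ≤ 1 := by
  unfold WW
  rw [norm_mul, norm_mul, norm_prod, norm_pow, norm_ee, mul_one]
  simp only [norm_ee, Finset.prod_const_one, one_mul]
  exact pow_le_one₀ (norm_nonneg _) (norm_cfn_le _ _ _)

lemma WW_cont (X₀ : Ω → ℝ) (S : Finset ℕ) (p : ℕ) (ω : Ω) :
    Continuous fun u => WW X κ X₀ S p u ω := by
  unfold WW
  simp_rw [cfn_eq]
  refine ((continuous_finsetProd S fun l _ => continuous_ee_left _).mul
    (continuous_ee_left _)).mul (((continuous_ee_left _).mul continuous_charFun).pow p)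

lemma norm_ee_sub_charFun_le (ν : Measure ℝ) [IsProbabilityMeasure ν] (u x : ℝ) :
    ‖ee u x - charFun ν u‖ ≤ 2 := by
  refine (norm_sub_le _ _).trans ?_
  linarith [norm_charFun_le_one (μ := ν) u, norm_ee u x]

lemma integrable_diff (hX : ∀ n, Measurable (X n)) (i : ℕ) (u : ℝ) :
    Integrable (fun ω => ‖ee u (X i ω) - charFun (κ ω) u‖) P := by
  refine integrable_of_meas_bound (((measurable_ee (hX i) u).sub
    (measurable_charFun_kernel κ u)).norm) 2 fun ω => ?_
  rw [norm_norm]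
  exact norm_ee_sub_charFun_le _ _ _

lemma integrable_WW (hX : ∀ n, Measurable (X n)) {X₀ : Ω → ℝ} (hX₀ : Measurable X₀)
    (S : Finset ℕ) (i p : ℕ) (u : ℝ) :
    Integrable (fun ω => WW X κ X₀ S p u ω * (ee u (X i ω) - charFun (κ ω) u)) P := by
  refine integrable_of_meas_bound ((WW_measurable hX hX₀ S p u).mul
    ((measurable_ee (hX i) u).sub (measurable_charFun_kernel κ u))) (1 * 2) fun ω => ?_
  rw [norm_mul]
  exact mul_le_mul (WW_norm _ _ _ _ _) (norm_ee_sub_charFun_le _ _ _) (norm_nonneg _) zero_le_one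

lemma norm_DD_le (hX : ∀ n, Measurable (X n)) (X₀ : Ω → ℝ) (S : Finset ℕ) (i p : ℕ) (u : ℝ) :
    ‖DD P X κ X₀ S i p u‖ ≤ ∫ ω, ‖ee u (X i ω) - charFun (κ ω) u‖ ∂P := by
  refine norm_integral_le_of_norm_le (integrable_diff hX i u) (Eventually.of_forall fun ω => ?_)
  rw [norm_mul]
  exact mul_le_of_le_one_left (norm_nonneg _) (WW_norm _ _ _ _ _)

lemma norm_DD_le_two (hX : ∀ n, Measurable (X n)) (X₀ : Ω → ℝ) (S : Finset ℕ) (i p : ℕ) (u : ℝ) :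
    ‖DD P X κ X₀ S i p u‖ ≤ 2 := by
  refine (norm_DD_le hX X₀ S i p u).trans ?_
  refine (integral_mono (integrable_diff hX i u) (integrable_const 2) fun ω =>
    norm_ee_sub_charFun_le _ _ _).trans ?_
  simp

lemma tendsto_diff_zero (hX : ∀ n, Measurable (X n)) (i : ℕ) :
    Tendsto (fun u : ℝ => ∫ ω, ‖ee u (X i ω) - charFun (κ ω) u‖ ∂P) (𝓝 0) (𝓝 0) := by
  have key : Tendsto (fun u : ℝ => ∫ ω, ‖ee u (X i ω) - charFun (κ ω) u‖ ∂P) (𝓝 0)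
      (𝓝 (∫ _, (0 : ℝ) ∂P)) := by
    refine tendsto_integral_filter_of_dominated_convergence (fun _ => 2)
      (Eventually.of_forall fun u => (integrable_diff hX i u).aestronglyMeasurable)
      (Eventually.of_forall fun u => Eventually.of_forall fun ω => ?_)
      (integrable_const _) (Eventually.of_forall fun ω => ?_)
    · rw [norm_norm]
      exact norm_ee_sub_charFun_le _ _ _
    · have hc : Continuous fun u => ‖ee u (X i ω) - charFun (κ ω) u‖ :=
        ((continuous_ee_left _).sub continuous_charFun).norm
      have := hc.tendsto 0
      simpa [ee] using this
  rwa [integral_zero] at key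

lemma compact_unif (hX : ∀ n, Measurable (X n)) (H : StableConv P X κ) {X₀ : Ω → ℝ}
    (hX₀ : Measurable X₀) (S : Finset ℕ) (p : ℕ) (T ε : ℝ) (hε : 0 < ε) :
    ∀ᶠ n in atTop, ∀ u : ℝ, |u| ≤ T → ‖DD P X κ X₀ S n p u‖ ≤ ε := by
  have h1 : {q : ℕ × ℝ | ‖DD P X κ X₀ S q.1 p q.2‖ ≤ ε} ∈ (atTop : Filter ℕ) ×ˢ 𝓝ˢ (Set.Icc (-T) T) := by
    refine isCompact_Icc.mem_prod_nhdsSet_of_forall fun u₀ _ => ?_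
    have h2 := (joint_conv hX H (WW X κ X₀ S p) (WW_measurable hX hX₀ S p) (WW_norm X₀ S p)
      (WW_cont X₀ S p) u₀).norm
    rw [norm_zero] at h2
    filter_upwards [h2.eventually (gt_mem_nhds hε)] with q hq
    exact hq.le
  obtain ⟨pa, ha, pb, hb, hab⟩ := eventually_prod_iff.1 h1
  filter_upwards [ha] with n hn u hu
  exact hab hn (hb.self_of_nhdsSet u (abs_le.1 hu))

lemma swap_step (hX : ∀ n, Measurable (X n)) (H : StableConv P X κ) {X₀ : Ω → ℝ}
    (hX₀ : Measurable X₀) (S : Finset ℕ) (T ε : ℝ) (hε : 0 < ε) :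
    ∀ᶠ n in atTop, ∀ N : ℕ, S.card < N → ∀ t : ℝ, |t| ≤ T →
      ‖DD P X κ X₀ S n (N - 1 - S.card) ((Real.sqrt N)⁻¹ * t)‖ ≤ ε := by
  obtain ⟨pa, ha, pb, hb, hab⟩ := eventually_prod_iff.1
    ((near_zero hX H).eventually (gt_mem_nhds hε))
  obtain ⟨δ, hδ, hball⟩ := Metric.eventually_nhds_iff.1 hb
  have h1 : ∀ᶠ N : ℕ in atTop, (Real.sqrt N)⁻¹ * T < δ :=
    (tendsto_inv_sqrt_mul T).eventually (gt_mem_nhds hδ)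
  obtain ⟨N₀, hN₀⟩ := eventually_atTop.1 h1
  have h2 : ∀ᶠ n in atTop, ∀ N ∈ Finset.range N₀, ∀ u : ℝ, |u| ≤ T →
      ‖DD P X κ X₀ S n (N - 1 - S.card) u‖ ≤ ε := by
    rw [Filter.eventually_all_finset]
    intro N _
    exact compact_unif hX H hX₀ S _ T ε hε
  filter_upwards [ha, h2] with n hn hn2 N hN t ht
  have hs0 : 0 ≤ (Real.sqrt N)⁻¹ := by positivity
  have habs : |(Real.sqrt N)⁻¹ * t| = (Real.sqrt N)⁻¹ * |t| := by
    rw [abs_mul, abs_of_nonneg hs0]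
  by_cases hlt : N < N₀
  · refine hn2 N (Finset.mem_range.2 hlt) _ ?_
    rw [habs]
    refine (mul_le_of_le_one_left (abs_nonneg _) ?_).trans ht
    apply inv_le_one_of_one_le₀
    rw [Real.one_le_sqrt]
    exact_mod_cast (by omega : 1 ≤ N)
  · refine (norm_DD_le hX X₀ S n _ _).trans (hab hn (hball ?_)).le
    rw [Real.dist_eq, sub_zero, habs]
    exact lt_of_le_of_lt (mul_le_mul_of_nonneg_left ht hs0) (hN₀ N (not_lt.1 hlt))

lemma telescope (a : ℕ → ℂ) (c : ℂ) (N : ℕ) :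
    ∏ k ∈ Finset.range N, a k - c ^ N
      = ∑ k ∈ Finset.range N, (∏ l ∈ Finset.range k, a l) * (a k - c) * c ^ (N - 1 - k) := by
  induction N with
  | zero => simp
  | succ N ih =>
    rw [Finset.sum_range_succ, Finset.prod_range_succ]
    have : ∑ k ∈ Finset.range N, (∏ l ∈ Finset.range k, a l) * (a k - c) * c ^ (N + 1 - 1 - k)
        = c * (∏ k ∈ Finset.range N, a k - c ^ N) := by
      rw [ih, Finset.mul_sum]
      refine Finset.sum_congr rfl fun k hk => ?_
      have hk := Finset.mem_range.1 hk
      have e : N + 1 - 1 - k = (N - 1 - k) + 1 := by omega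
      rw [e, pow_succ]
      ring
    rw [this]
    simp
    ring

theorem swap (hX : ∀ n, Measurable (X n)) (H : StableConv P X κ) {X₀ : Ω → ℝ}
    (hX₀ : Measurable X₀) :
    ∃ n : ℕ → ℕ, StrictMono n ∧ ∀ m : ℕ → ℕ, StrictMono m → ∀ t : ℝ,
      Tendsto (fun N : ℕ =>
        (∫ ω, ∏ k ∈ Finset.range N, ee ((Real.sqrt N)⁻¹ * t) (X (n (m k)) ω - X₀ ω) ∂P)
          - ∫ ω, (cfn (κ ω) (X₀ ω) ((Real.sqrt N)⁻¹ * t)) ^ N ∂P) atTop (𝓝 0) := by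
  obtain ⟨n, hn, hQ⟩ := exists_selection
    (fun s i => ∀ S ∈ s.powerset, ∀ N : ℕ, S.card < N → ∀ t : ℝ, |t| ≤ (s.card : ℝ) →
      ‖DD P X κ X₀ S i (N - 1 - S.card) ((Real.sqrt N)⁻¹ * t)‖ ≤ (1 / 2 : ℝ) ^ s.card)
    (fun s => by
      rw [Filter.eventually_all_finset]
      intro S _
      exact swap_step hX H hX₀ S _ _ (by positivity))
  refine ⟨n, hn, fun m hm t => ?_⟩
  set f : ℕ → ℕ → ℂ := fun N k => if k < N then
    DD P X κ X₀ ((Finset.range k).image (n ∘ m)) (n (m k)) (N - 1 - k) ((Real.sqrt N)⁻¹ * t)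
    else 0 with hf
  have hinj : Function.Injective (n ∘ m) := (hn.comp hm).injective
  have hsum : ∀ N : ℕ,
      (∫ ω, ∏ k ∈ Finset.range N, ee ((Real.sqrt N)⁻¹ * t) (X (n (m k)) ω - X₀ ω) ∂P)
          - ∫ ω, (cfn (κ ω) (X₀ ω) ((Real.sqrt N)⁻¹ * t)) ^ N ∂P = ∑' k, f N k := by
    intro N
    rw [tsum_eq_sum (s := Finset.range N) (fun k hk => by
      simp only [hf]; rw [if_neg (by simpa using hk)])]
    rw [← integral_sub]
    · simp_rw [telescope]
      rw [integral_finsetSum]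
      · refine Finset.sum_congr rfl fun k hk => ?_
        simp only [hf]
        rw [if_pos (Finset.mem_range.1 hk), DD]
        congr 1
        ext ω
        rw [WW_eq, Finset.prod_image (fun a _ b _ h => hinj h)]
        rfl
      · intro k _
        have := integrable_WW (P := P) (κ := κ) hX hX₀ ((Finset.range k).image (n ∘ m)) (n (m k))
          (N - 1 - k) ((Real.sqrt N)⁻¹ * t)
        refine this.congr (Eventually.of_forall fun ω => ?_)
        beta_reduce
        rw [WW_eq, Finset.prod_image (fun a _ b _ h => hinj h)]
        rfl
    · refine integrable_of_meas_bound (Finset.measurable_fun_prod _ fun l _ =>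
        measurable_ee ((hX _).sub hX₀) _) 1 fun ω => ?_
      rw [norm_prod]
      simp [norm_ee]
    · refine integrable_of_meas_bound ((measurable_cfn κ hX₀ _).pow_const N) 1 fun ω => ?_
      rw [norm_pow]
      exact pow_le_one₀ (norm_nonneg _) (norm_cfn_le _ _ _)
  simp_rw [hsum]
  obtain ⟨K, hK⟩ := exists_nat_ge |t|
  have hlim : Tendsto (fun N => ∑' k, f N k) atTop (𝓝 (∑' _ : ℕ, (0 : ℂ))) := by
    refine tendsto_tsum_of_dominated_convergence
      (bound := fun k => 2 * 2 ^ K * (1 / 2 : ℝ) ^ k) ?_ (fun k => ?_)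
      (Eventually.of_forall fun N k => ?_)
    · exact (summable_geometric_of_lt_one (by norm_num) (by norm_num)).mul_left _
    · refine squeeze_zero_norm (fun N => ?_)
        ((tendsto_diff_zero (P := P) (κ := κ) hX (n (m k))).comp (tendsto_inv_sqrt_mul t))
      simp only [hf, Function.comp]
      split_ifs
      · exact norm_DD_le hX _ _ _ _ _
      · rw [norm_zero]
        exact integral_nonneg fun _ => norm_nonneg _
    · simp only [hf]
      split_ifs with hkN
      · have h2K : (1 : ℝ) ≤ 2 ^ K := one_le_pow₀ (by norm_num)
        have hk0 : (0 : ℝ) < (1 / 2) ^ k := by positivity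
        by_cases htm : |t| ≤ (m k : ℝ)
        · have hcard : ((Finset.range (m k)).image n).card = m k := by
            rw [Finset.card_image_of_injective _ hn.injective, Finset.card_range]
          have hcard2 : ((Finset.range k).image (n ∘ m)).card = k := by
            rw [Finset.card_image_of_injective _ hinj, Finset.card_range]
          have := hQ (m k) ((Finset.range k).image (n ∘ m)) (by
            rw [Finset.mem_powerset]
            intro x hx
            obtain ⟨l, hl, rfl⟩ := Finset.mem_image.1 hx
            exact Finset.mem_image.2 ⟨m l, Finset.mem_range.2 (hm (Finset.mem_range.1 hl)), rfl⟩)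
            N (by rw [hcard2]; exact hkN) t (by rw [hcard]; exact htm)
          rw [hcard, hcard2] at this
          refine this.trans ?_
          have h3 : (1 / 2 : ℝ) ^ m k ≤ (1 / 2) ^ k :=
            pow_le_pow_of_le_one (by norm_num) (by norm_num) (hm.id_le k)
          nlinarith
        · have hkK : k ≤ K := by
            have h4 : (m k : ℝ) < K := lt_of_lt_of_le (not_le.1 htm) hK
            have h5 : m k < K := by exact_mod_cast h4
            exact ((hm.id_le k).trans h5.le)
          refine (norm_DD_le_two hX _ _ _ _ _).trans ?_
          have h6 : (1 : ℝ) ≤ 2 ^ K * (1 / 2) ^ k := by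
            rw [one_div, inv_pow, ← div_eq_mul_inv, one_le_div (by positivity)]
            exact pow_le_pow_right₀ (by norm_num) hkK
          linarith
      · rw [norm_zero]; positivity
  rwa [tsum_zero] at hlim

end swap

lemma exp_eq_prod (X : ℕ → Ω → ℝ) (X₀ : Ω → ℝ) (t : ℝ) (N : ℕ) (j : ℕ → ℕ) (ω : Ω) :
    Complex.exp (Complex.I *
      ((t * ((Real.sqrt (N : ℝ))⁻¹ * ∑ k ∈ Finset.range N, (X (j k) ω - X₀ ω)) : ℝ)))
      = ∏ k ∈ Finset.range N, ee ((Real.sqrt N)⁻¹ * t) (X (j k) ω - X₀ ω) := by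
  unfold ee
  rw [← Complex.exp_sum]
  congr 1
  push_cast
  rw [← Finset.sum_mul, ← Finset.mul_sum]
  ring

lemma stableConv_of_lrm (P : Measure Ω) [IsProbabilityMeasure P] (X : ℕ → Ω → ℝ)
    (hX : ∀ n, Measurable (X n)) (κ : Kernel Ω ℝ) [IsMarkovKernel κ] (F : ℝ → ℝ)
    (hF : IsDistFun F)
    (h : ∀ t : ℝ, ContinuousAt F t → ∀ η : Ω → ℝ, Integrable η P →
      Tendsto (fun n => ∫ ω, ({ω' | X n ω' ≤ t}.indicator (fun _ => (1 : ℝ)) ω) * η ω ∂P)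
        atTop (𝓝 (∫ ω, (κ ω (Set.Iic t)).toReal * η ω ∂P))) :
    StableConv P X κ := by
  have hD : Dense {t : ℝ | ContinuousAt F t} := by
    have := hF.1.countable_not_continuousAt.dense_compl ℝ
    have e : {t : ℝ | ContinuousAt F t} = {t : ℝ | ¬ ContinuousAt F t}ᶜ := by
      ext t; simp
    rw [e]
    exact this
  intro W hW hW1 f
  exact weak_complex P X hX κ hD h W hW hW1 f

lemma sufficiency (P : Measure Ω) [IsProbabilityMeasure P] (κ : Kernel Ω ℝ) [IsMarkovKernel κ]
    (hfin : ∀ᵐ ω ∂P, ∫⁻ x, ENNReal.ofReal (x ^ 2) ∂(κ ω) < ⊤) (Y : Ω → ℝ)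
    (hY : ∀ᵐ ω ∂P, Y ω = variance (fun x : ℝ => x) (κ ω)) (t : ℝ)
    (hm : Measurable fun ω => ∫ x, x ∂(κ ω)) :
    Tendsto (fun N : ℕ => ∫ ω, (cfn (κ ω) (∫ x, x ∂(κ ω)) ((Real.sqrt N)⁻¹ * t)) ^ N ∂P) atTop
      (𝓝 ((∫ ω, Real.exp (-(Y ω) * t ^ 2 / 2) ∂P : ℝ) : ℂ)) := by
  rw [← integral_complex_ofReal]
  refine tendsto_integral_of_dominated_convergence (fun _ => 1)
    (fun N => ((measurable_cfn κ hm _).pow_const N).aestronglyMeasurable)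
    (integrable_const _) (fun N => Eventually.of_forall fun ω => ?_) ?_
  · rw [norm_pow]
    exact pow_le_one₀ (norm_nonneg _) (norm_cfn_le _ _ _)
  · filter_upwards [hfin, hY] with ω h1 h2
    rw [h2]
    exact clt_pointwise (κ ω) h1 t

lemma necessity (P : Measure Ω) [IsProbabilityMeasure P] (κ : Kernel Ω ℝ) [IsMarkovKernel κ]
    (X₀ Y : Ω → ℝ) (hYm : Measurable Y) (hY : ∀ᵐ ω ∂P, 0 ≤ Y ω)
    (h : ∀ t : ℝ, Tendsto (fun N : ℕ => ∫ ω, (cfn (κ ω) (X₀ ω) ((Real.sqrt N)⁻¹ * t)) ^ N ∂P) atTop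
      (𝓝 ((∫ ω, Real.exp (-(Y ω) * t ^ 2 / 2) ∂P : ℝ) : ℂ))) :
    ∀ᵐ ω ∂P, ∫⁻ x, ENNReal.ofReal (x ^ 2) ∂(κ ω) < ⊤ := by
  set G : Set Ω := {ω | ∫⁻ x, ENNReal.ofReal (x ^ 2) ∂(κ ω) < ⊤} with hG
  have hmeas : Measurable fun ω => ∫⁻ x, ENNReal.ofReal (x ^ 2) ∂(κ ω) :=
    Measurable.lintegral_kernel (by fun_prop)
  have hGm : MeasurableSet G := measurableSet_lt hmeas measurable_const
  have hbound : ∀ t : ℝ, t ≠ 0 → ∫ ω, Real.exp (-(Y ω) * t ^ 2 / 2) ∂P ≤ P.real G := by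
    intro t ht
    have h1 := (h t).norm
    have h0 : 0 ≤ ∫ ω, Real.exp (-(Y ω) * t ^ 2 / 2) ∂P := integral_nonneg fun _ => (Real.exp_pos _).le
    rw [Complex.norm_real, Real.norm_of_nonneg h0] at h1
    have iB : ∀ N : ℕ, Integrable
        (fun ω => Gᶜ.indicator (fun ω => ‖charFun (κ ω) ((Real.sqrt N)⁻¹ * t)‖ ^ N) ω) P := by
      intro N
      refine integrable_of_meas_bound ((((measurable_charFun_kernel κ _).norm).pow_const N).indicator
        hGm.compl) 1 fun ω => ?_
      refine (norm_indicator_le_norm_self _ _).trans ?_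
      rw [norm_pow, norm_norm]
      exact pow_le_one₀ (norm_nonneg _) (norm_charFun_le_one _)
    have iG : Integrable (fun ω => G.indicator (fun _ => (1 : ℝ)) ω) P :=
      (integrable_const (1 : ℝ)).indicator hGm
    have h2 : Tendsto (fun N : ℕ => ∫ ω,
        Gᶜ.indicator (fun ω => ‖charFun (κ ω) ((Real.sqrt N)⁻¹ * t)‖ ^ N) ω ∂P) atTop
        (𝓝 (∫ _, (0 : ℝ) ∂P)) := by
      refine tendsto_integral_of_dominated_convergence (fun _ => 1)
        (fun N => (iB N).aestronglyMeasurable)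
        (integrable_const _) (fun N => Eventually.of_forall fun ω => ?_)
        (Eventually.of_forall fun ω => ?_)
      · refine (norm_indicator_le_norm_self _ _).trans ?_
        rw [norm_pow, norm_norm]
        exact pow_le_one₀ (norm_nonneg _) (norm_charFun_le_one _)
      · by_cases hω : ω ∈ G
        · simp [hω]
        · have hω' : ω ∈ Gᶜ := hω
          simp only [Set.indicator_of_mem hω']
          exact divergence_pointwise (κ ω) (not_lt_top_iff.1 hω) t ht
    rw [integral_zero] at h2
    have h3 := h2.add_const (P.real G)
    rw [zero_add] at h3
    refine le_of_tendsto_of_tendsto' h1 h3 fun N => ?_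
    have e : P.real G = ∫ ω, G.indicator (fun _ => (1 : ℝ)) ω ∂P := by
      rw [integral_indicator hGm]; simp
    rw [e, ← integral_add (iB N) iG]
    refine norm_integral_le_of_norm_le ((iB N).add iG) (Eventually.of_forall fun ω => ?_)
    rw [norm_pow]
    by_cases hω : ω ∈ G
    · simp [hω]
      exact pow_le_one₀ (norm_nonneg _) (norm_cfn_le _ _ _)
    · have hω' : ω ∈ Gᶜ := hω
      simp only [Set.indicator_of_mem hω', Set.indicator_of_notMem hω, add_zero]
      rw [cfn_eq, norm_mul, norm_ee, one_mul]
  have hlim : Tendsto (fun j : ℕ => ∫ ω, Real.exp (-(Y ω) * (1 / ((j : ℝ) + 1)) ^ 2 / 2) ∂P) atTop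
      (𝓝 (∫ _, (1 : ℝ) ∂P)) := by
    refine tendsto_integral_of_dominated_convergence (fun _ => 1)
      (fun j => by fun_prop) (integrable_const _) (fun j => ?_)
      (Eventually.of_forall fun ω => ?_)
    · filter_upwards [hY] with ω hω
      rw [Real.norm_of_nonneg (Real.exp_pos _).le, Real.exp_le_one_iff]
      have : 0 ≤ Y ω * (1 / ((j : ℝ) + 1)) ^ 2 := by positivity
      linarith
    · have hc : Continuous fun s : ℝ => Real.exp (-(Y ω) * s ^ 2 / 2) := by fun_prop
      have h5 := (hc.tendsto 0).comp (tendsto_one_div_add_atTop_nhds_zero_nat (𝕜 := ℝ))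
      simpa [Function.comp_def] using h5
  have h1 : (1 : ℝ) ≤ P.real G := by
    have := le_of_tendsto' hlim fun j => hbound _ (by positivity)
    simpa using this
  have h6 : P.real Gᶜ = 0 := by
    have := probReal_compl_eq_one_sub (μ := P) hGm
    have h7 : 0 ≤ P.real Gᶜ := measureReal_nonneg
    linarith
  rw [ae_iff]
  have h8 := (measureReal_eq_zero_iff (μ := P) (s := Gᶜ)).1 h6
  exact h8

end SubseqCLT

/-- **Theorem 1.** Let `(X_n)` be a determining sequence with limit random measure `μ`. There
exists a subsequence `(X_{n_k})` and random variables `X₀` and `Y ≥ 0` such that the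
subsequence, together with all of its further subsequences, satisfies the randomized CLT
`N^{-1/2} ∑_{k≤N} (X_{n_k} - X₀) → N(0, Y)` in distribution (equivalently, the characteristic
functions converge to `E exp(-Y t²/2)` for every `t`) if and only if
`∫ x² dμ(x) < ∞` almost surely. -/
theorem statement1
    {Ω : Type*} [MeasurableSpace Ω] (P : Measure Ω) [IsProbabilityMeasure P]
    (X : ℕ → Ω → ℝ) (hXmeas : ∀ n, Measurable (X n)) (μ : Ω → Measure ℝ)
    (hdet : Determining P X) (hlrm : IsLimitRandomMeasure P X μ) :
    (∃ n : ℕ → ℕ, StrictMono n ∧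
      ∃ X₀ Y : Ω → ℝ, Measurable X₀ ∧ Measurable Y ∧ (∀ᵐ ω ∂P, 0 ≤ Y ω) ∧
        ∀ m : ℕ → ℕ, StrictMono m → ∀ t : ℝ,
          Tendsto
            (fun N : ℕ => ∫ ω, Complex.exp (Complex.I *
              ((t * ((Real.sqrt (N : ℝ))⁻¹ * ∑ k ∈ Finset.range N, (X (n (m k)) ω - X₀ ω)) : ℝ))) ∂P)
            atTop (𝓝 ((∫ ω, Real.exp (-(Y ω) * t ^ 2 / 2) ∂P : ℝ) : ℂ)))
    ↔ (∀ᵐ ω ∂P, ∫⁻ x, ENNReal.ofReal (x ^ 2) ∂(μ ω) < ⊤) := by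
  obtain ⟨hprob, hmeas, F, hF, -, hconv⟩ := hlrm
  let κ : ProbabilityTheory.Kernel Ω ℝ := ⟨μ, Measure.measurable_of_measurable_coe _ hmeas⟩
  have hκ : ∀ ω, κ ω = μ ω := fun _ => rfl
  haveI : ProbabilityTheory.IsMarkovKernel κ := ⟨hprob⟩
  have H : SubseqCLT.StableConv P X κ := SubseqCLT.stableConv_of_lrm P X hXmeas κ F hF hconv
  constructor
  · rintro ⟨n, hn, X₀, Y, hX₀, hYm, hY, hclt⟩
    have H' : SubseqCLT.StableConv P (fun k => X (n k)) κ := fun W hW hW1 f =>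
      (H W hW hW1 f).comp hn.tendsto_atTop
    obtain ⟨m, hm, hswap⟩ := SubseqCLT.swap (fun k => hXmeas (n k)) H' hX₀
    refine SubseqCLT.necessity P κ X₀ Y hYm hY fun t => ?_
    have h1 := hclt m hm t
    have h2 := hswap id strictMono_id t
    have h3 := h1.sub h2
    rw [sub_zero] at h3
    refine h3.congr fun N => ?_
    simp_rw [SubseqCLT.exp_eq_prod X X₀ t N (fun k => n (m k))]
    simp only [id]
    ring
  · intro hfin
    have hm1 : Measurable fun ω => ∫ x, x ∂(κ ω) :=
      (stronglyMeasurable_id.integral_kernel (κ := κ)).measurable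
    have hm2 : Measurable fun ω => ∫ x, x ^ 2 ∂(κ ω) :=
      ((continuous_pow 2 : Continuous fun x : ℝ => x ^ 2).stronglyMeasurable.integral_kernel
        (κ := κ)).measurable
    have hYv : ∀ᵐ ω ∂P, (∫ x, x ^ 2 ∂(κ ω)) - (∫ x, x ∂(κ ω)) ^ 2
        = ProbabilityTheory.variance (fun x : ℝ => x) (κ ω) := by
      filter_upwards [hfin] with ω hω
      rw [ProbabilityTheory.variance_eq_sub (SubseqCLT.memLp_two_of_lintegral (κ ω) hω)]
      rfl
    obtain ⟨n, hn, hswap⟩ := SubseqCLT.swap hXmeas H hm1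
    refine ⟨n, hn, _, fun ω => (∫ x, x ^ 2 ∂(κ ω)) - (∫ x, x ∂(κ ω)) ^ 2, hm1,
      hm2.sub (hm1.pow_const 2), ?_, fun m hm t => ?_⟩
    · filter_upwards [hYv] with ω hω
      rw [hω]
      exact ProbabilityTheory.variance_nonneg _ _
    · have h1 := (hswap m hm t).add (SubseqCLT.sufficiency P κ hfin _ hYv t hm1)
      rw [zero_add] at h1
      refine h1.congr fun N => ?_
      simp_rw [SubseqCLT.exp_eq_prod X (fun ω => ∫ x, x ∂(κ ω)) t N (fun k => n (m k))]
      ring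
end

section
/- Let 0 < α < 2, c > 0, and let μ, μ₁, μ₂, … ∈ S(α, c) with characteristic functions φ, φ₁, φ₂, … and associated functions β, β₁, β₂, …. If ρ(μ_n, μ) → 0 as n → ∞, then β_n(t) → β(t) and φ_n(t) → φ(t) uniformly on compact intervals, and consequently μ_n converges to μ in distribution (weakly). -/
open MeasureTheory Filter Finset
open scoped Topology BoundedContinuousFunction ENNReal

theorem rho_bound (β₁ β₂ : ℝ → ℝ) (M : ℝ) (hM : ∀ t, |β₁ t - β₂ t| ≤ M) (K : ℕ) (t : ℝ)
    (ht : |t| ≤ 2 ^ K) : |β₁ t - β₂ t| ≤ 2 ^ K * rho β₁ β₂ := by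
  have hM0 : 0 ≤ M := (abs_nonneg _).trans (hM 0)
  have h0 : 0 ≤ ⨆ t : {t : ℝ // |t| ≤ 1}, |β₁ t.1 - β₂ t.1| :=
    Real.iSup_nonneg fun _ => abs_nonneg _
  have hs0 : ∀ k : ℕ, 0 ≤ ⨆ t : {t : ℝ // 2 ^ k ≤ |t| ∧ |t| ≤ 2 ^ (k + 1)}, |β₁ t.1 - β₂ t.1| :=
    fun k => Real.iSup_nonneg fun _ => abs_nonneg _
  have hk0 : ∀ k : ℕ, 0 ≤ (2 ^ k : ℝ)⁻¹ *
      ⨆ t : {t : ℝ // 2 ^ k ≤ |t| ∧ |t| ≤ 2 ^ (k + 1)}, |β₁ t.1 - β₂ t.1| :=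
    fun k => mul_nonneg (by positivity) (hs0 k)
  have hsum : Summable fun k : ℕ => (2 ^ k : ℝ)⁻¹ *
      ⨆ t : {t : ℝ // 2 ^ k ≤ |t| ∧ |t| ≤ 2 ^ (k + 1)}, |β₁ t.1 - β₂ t.1| := by
    refine Summable.of_nonneg_of_le hk0 (g := _) (f := fun k : ℕ => (1 / 2 : ℝ) ^ k * M) ?_
      (summable_geometric_two.mul_right M)
    intro k
    have : ((2 : ℝ) ^ k)⁻¹ = (1 / 2) ^ k := by simp
    rw [this]
    exact mul_le_mul_of_nonneg_left (Real.iSup_le (fun s => hM _) hM0) (by positivity)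
  have ht0 := tsum_nonneg (L := .unconditional ℕ) hk0
  have hrho : 0 ≤ rho β₁ β₂ := add_nonneg h0 ht0
  rcases le_total |t| 1 with h1 | h1
  · have hle : |β₁ t - β₂ t| ≤ ⨆ t : {t : ℝ // |t| ≤ 1}, |β₁ t.1 - β₂ t.1| :=
      le_ciSup (f := fun t : {t : ℝ // |t| ≤ 1} => |β₁ t.1 - β₂ t.1|)
        ⟨M, by rintro _ ⟨s, rfl⟩; exact hM _⟩ ⟨t, h1⟩
    have h2 : |β₁ t - β₂ t| ≤ rho β₁ β₂ := hle.trans (le_add_of_nonneg_right ht0)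
    exact h2.trans (le_mul_of_one_le_left hrho (one_le_pow₀ (by norm_num)))
  · obtain ⟨k, hk1, hk2⟩ := exists_nat_pow_near h1 (by norm_num : (1 : ℝ) < 2)
    have hkK : (2 : ℝ) ^ k ≤ 2 ^ K := hk1.trans ht
    have hle : |β₁ t - β₂ t| ≤
        ⨆ t : {t : ℝ // 2 ^ k ≤ |t| ∧ |t| ≤ 2 ^ (k + 1)}, |β₁ t.1 - β₂ t.1| :=
      le_ciSup (f := fun t : {t : ℝ // 2 ^ k ≤ |t| ∧ |t| ≤ 2 ^ (k + 1)} => |β₁ t.1 - β₂ t.1|)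
        ⟨M, by rintro _ ⟨s, rfl⟩; exact hM _⟩ ⟨t, hk1, hk2.le⟩
    have h3 := hsum.le_tsum k (fun j _ => hk0 j)
    have h4 : (2 ^ k : ℝ)⁻¹ * |β₁ t - β₂ t| ≤ rho β₁ β₂ :=
      ((mul_le_mul_of_nonneg_left hle (by positivity)).trans h3).trans (le_add_of_nonneg_left h0)
    have h5 : |β₁ t - β₂ t| ≤ 2 ^ k * rho β₁ β₂ := by
      rwa [inv_mul_le_iff₀ (by positivity)] at h4
    exact h5.trans (mul_le_mul_of_nonneg_right hkK hrho)

theorem charFn_eq_charFun (μ : Measure ℝ) (t : ℝ) : charFn μ t = charFun μ t := by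
  rw [charFun_apply_real, charFn]
  congr 1
  ext x
  congr 1
  ring

theorem statement6
    (α c : ℝ) (hα : 0 < α) (hα2 : α < 2) (hc : 0 < c)
    (μ : Measure ℝ) (μn : ℕ → Measure ℝ) (β : ℝ → ℝ) (βn : ℕ → ℝ → ℝ)
    (hμ : MemS α c μ) (hμn : ∀ n, MemS α c (μn n))
    (hβ : IsAssocFn α c μ β) (hβn : ∀ n, IsAssocFn α c (μn n) (βn n))
    (hρ : Tendsto (fun n => rho (βn n) β) atTop (𝓝 0)) :
    (∀ a b : ℝ, TendstoUniformlyOn (fun n => βn n) β atTop (Set.Icc a b)) ∧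
    (∀ a b : ℝ, TendstoUniformlyOn (fun n t => charFn (μn n) t) (charFn μ) atTop
      (Set.Icc a b)) ∧
    (∀ f : ℝ →ᵇ ℝ, Tendsto (fun n => ∫ x, f x ∂(μn n)) atTop (𝓝 (∫ x, f x ∂μ))) := by
  have key : ∀ (K n : ℕ) (t : ℝ), |t| ≤ 2 ^ K → |βn n t - β t| ≤ 2 ^ K * rho (βn n) β := by
    intro K n t ht
    obtain ⟨M₁, h₁⟩ := (hβn n).bounded
    obtain ⟨M₂, h₂⟩ := hβ.bounded
    exact rho_bound _ _ (M₁ + M₂)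
      (fun t => (abs_sub _ _).trans (add_le_add (h₁ t) (h₂ t))) K t ht
  have hK : ∀ a b : ℝ, ∃ K : ℕ, ∀ t ∈ Set.Icc a b, |t| ≤ 2 ^ K := by
    intro a b
    obtain ⟨K, hK⟩ := pow_unbounded_of_one_lt (max |a| |b|) (by norm_num : (1 : ℝ) < 2)
    exact ⟨K, fun t ht => (abs_le_max_abs_abs ht.1 ht.2).trans hK.le⟩
  have hdom : ∀ C : ℝ, ∀ ε > 0, ∀ᶠ n in atTop, C * rho (βn n) β < ε := by
    intro C ε hε
    have := hρ.const_mul C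
    rw [mul_zero] at this
    exact this.eventually (gt_mem_nhds hε)
  have hφ : ∀ a b : ℝ, TendstoUniformlyOn (fun n t => charFn (μn n) t) (charFn μ) atTop
      (Set.Icc a b) := by
    intro a b
    obtain ⟨K, hK⟩ := hK a b
    rw [Metric.tendstoUniformlyOn_iff]
    intro ε hε
    filter_upwards [hdom (2 ^ K * ((2 : ℝ) ^ K) ^ α) ε hε] with n hn t ht
    rw [dist_comm, dist_eq_norm, hβ.eq, (hβn n).eq, ← Complex.ofReal_sub, Complex.norm_real,
      Real.norm_eq_abs]
    have e : 1 - c * |t| ^ α + βn n t * |t| ^ α - (1 - c * |t| ^ α + β t * |t| ^ α)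
        = (βn n t - β t) * |t| ^ α := by ring
    have hp : 0 ≤ |t| ^ α := Real.rpow_nonneg (abs_nonneg _) _
    rw [e, abs_mul, abs_of_nonneg hp]
    have h1 := key K n t (hK t ht)
    have h2 : |t| ^ α ≤ ((2 : ℝ) ^ K) ^ α :=
      Real.rpow_le_rpow (abs_nonneg _) (hK t ht) hα.le
    have h3 := mul_le_mul h1 h2 hp ((abs_nonneg _).trans h1)
    linarith
  refine ⟨?_, hφ, ?_⟩
  · intro a b
    obtain ⟨K, hK⟩ := hK a b
    rw [Metric.tendstoUniformlyOn_iff]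
    intro ε hε
    filter_upwards [hdom (2 ^ K) ε hε] with n hn t ht
    rw [dist_comm, Real.dist_eq]
    exact (key K n t (hK t ht)).trans_lt hn
  · let P : ℕ → ProbabilityMeasure ℝ := fun n => ⟨μn n, (hμn n).1⟩
    let P₀ : ProbabilityMeasure ℝ := ⟨μ, hμ.1⟩
    have hP : Tendsto P atTop (𝓝 P₀) := by
      refine ProbabilityMeasure.tendsto_iff_tendsto_charFun.2 fun t => ?_
      have := (hφ t t).tendsto_at (x := t) ⟨le_rfl, le_rfl⟩
      simp only [charFn_eq_charFun] at this
      exact this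
    exact fun f => ProbabilityMeasure.tendsto_iff_forall_integral_tendsto.1 hP f
end

section
/- Every tight sequence (X_n) of random variables on a probability space (Ω, 𝓕, P) contains a determining subsequence, i.e. a subsequence (X_{n_k}) such that for every measurable A ⊂ Ω with P(A) > 0 there exists a distribution function F_A with lim_{k→∞} P(X_{n_k} < t | A) = F_A(t) for all continuity points t of F_A. -/
open MeasureTheory Filter Finset
open scoped Topology BoundedContinuousFunction ENNReal

/-- Weak convergence against a set containing the sequence implies weak convergence. -/
lemma weak_conv_aux {H : Type*} [NormedAddCommGroup H] [InnerProductSpace ℝ H] [CompleteSpace H]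
    (S : Set H) (f : ℕ → H) (hfS : ∀ n, f n ∈ S) (hf : ∀ n, ‖f n‖ ≤ 1)
    (hS : ∀ s ∈ S, CauchySeq (fun n => inner ℝ (f n) s)) (g : H) :
    CauchySeq (fun n => inner ℝ (f n) g) := by
  let W : Submodule ℝ H :=
    { carrier := {g | CauchySeq (fun n => inner ℝ (f n) g)}
      add_mem' := by
        intro a b ha hb
        simp only [Set.mem_ofPred_eq, inner_add_right] at *
        exact ha.add hb
      zero_mem' := by
        simp only [Set.mem_ofPred_eq, inner_zero_right]
        exact cauchySeq_const 0
      smul_mem' := by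
        intro c a ha
        simp only [Set.mem_ofPred_eq, inner_smul_right] at *
        obtain ⟨l, hl⟩ := cauchySeq_tendsto_of_complete ha
        exact (hl.const_mul c).cauchySeq }
  have hW : IsClosed (W : Set H) := by
    rw [← closure_subset_iff_isClosed]
    intro x hx
    change CauchySeq _
    rw [Metric.cauchySeq_iff]
    intro ε hε
    obtain ⟨y, hy, hxy⟩ := Metric.mem_closure_iff.1 hx (ε / 4) (by positivity)
    have hy' : CauchySeq (fun n => inner ℝ (f n) y) := hy
    obtain ⟨N, hN⟩ := Metric.cauchySeq_iff.1 hy' (ε / 4) (by positivity)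
    have key : ∀ n, |inner ℝ (f n) x - inner ℝ (f n) y| ≤ ε / 4 := by
      intro n
      rw [← inner_sub_right]
      calc |inner ℝ (f n) (x - y)| ≤ ‖f n‖ * ‖x - y‖ := abs_real_inner_le_norm _ _
        _ ≤ 1 * ‖x - y‖ := by gcongr; exact hf n
        _ ≤ ε / 4 := by rw [one_mul, ← dist_eq_norm]; exact hxy.le
    refine ⟨N, fun m hm n hn => ?_⟩
    have h1 := hN m hm n hn
    rw [Real.dist_eq] at *
    have h2 := abs_le.1 (key m)
    have h3 := abs_le.1 (key n)
    have h4 := abs_lt.1 h1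
    rw [abs_lt]
    constructor <;> linarith [h2.1, h2.2, h3.1, h3.2, h4.1, h4.2]
  have : CompleteSpace W := hW.completeSpace_coe
  obtain ⟨y, hy, z, hz, rfl⟩ := W.exists_add_mem_mem_orthogonal g
  have hfW : ∀ n, f n ∈ W := fun n => hS _ (hfS n)
  have h0 : ∀ n, inner ℝ (f n) (y + z) = inner ℝ (f n) y := by
    intro n
    rw [inner_add_right, (Submodule.mem_orthogonal W z).1 hz _ (hfW n), add_zero]
  simp only [h0]
  exact hy

/-- Helly type lemma. -/
lemma helly_aux (u : ℕ → ℝ → ℝ) (hmono : ∀ n, Monotone (u n)) (h0 : ∀ n t, 0 ≤ u n t)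
    (h1 : ∀ n t, u n t ≤ 1) (hq : ∀ q : ℚ, CauchySeq (fun n => u n q))
    (htail : ∀ ε > (0 : ℝ), ∃ K : ℝ, ∀ n, u n (-K) ≤ ε ∧ ∀ t > K, 1 - ε ≤ u n t) :
    ∃ F : ℝ → ℝ, IsDistFun F ∧ ∀ t : ℝ, ContinuousAt F t →
      Tendsto (fun n => u n t) atTop (𝓝 (F t)) := by
  have hb : ∀ t, IsBoundedUnder (· ≤ ·) atTop (fun n => u n t) :=
    fun t => isBoundedUnder_of ⟨1, fun n => h1 n t⟩
  have hb' : ∀ t, IsBoundedUnder (· ≥ ·) atTop (fun n => u n t) :=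
    fun t => isBoundedUnder_of ⟨0, fun n => h0 n t⟩
  let F : ℝ → ℝ := fun t => limsup (fun n => u n t) atTop
  have hFle : ∀ t c, (∀ n, u n t ≤ c) → F t ≤ c := fun t c h =>
    limsup_le_of_le (hb' t).isCoboundedUnder_le (Eventually.of_forall h)
  have hleF : ∀ t c, (∀ n, c ≤ u n t) → c ≤ F t := fun t c h =>
    le_limsup_of_frequently_le (Eventually.of_forall h).frequently (hb t)
  have hFm : Monotone F := fun s t hst =>
    limsup_le_limsup (Eventually.of_forall fun n => hmono n hst)
      (hb' s).isCoboundedUnder_le (hb t)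
  have hFq : ∀ q : ℚ, Tendsto (fun n => u n q) atTop (𝓝 (F q)) := by
    intro q
    obtain ⟨l, hl⟩ := cauchySeq_tendsto_of_complete (hq q)
    have : F q = l := hl.limsup_eq
    rw [this]; exact hl
  refine ⟨F, ⟨hFm, ?_, ?_⟩, ?_⟩
  · rw [Metric.tendsto_nhds]
    intro ε hε
    obtain ⟨K, hK⟩ := htail (ε / 2) (by positivity)
    filter_upwards [eventually_le_atBot (-K)] with t ht
    have a := (hFm ht).trans (hFle (-K) _ fun n => (hK n).1)
    have b := hleF t 0 fun n => h0 n t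
    rw [Real.dist_eq, abs_lt]
    constructor <;> linarith
  · rw [Metric.tendsto_nhds]
    intro ε hε
    obtain ⟨K, hK⟩ := htail (ε / 2) (by positivity)
    filter_upwards [eventually_gt_atTop K] with t ht
    have a := hFle t 1 fun n => h1 n t
    have b := hleF t _ fun n => (hK n).2 t ht
    rw [Real.dist_eq, abs_lt]
    constructor <;> linarith
  · intro t ht
    rw [tendsto_order]
    constructor
    · intro a ha
      obtain ⟨δ, hδ, h⟩ := Metric.eventually_nhds_iff.1 (ht.eventually (lt_mem_nhds ha))
      obtain ⟨q, hq1, hq2⟩ := exists_rat_btwn (show t - δ < t by linarith)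
      have : a < F q := h (by rw [Real.dist_eq, abs_lt]; constructor <;> linarith)
      filter_upwards [(hFq q).eventually (lt_mem_nhds this)] with n hn
      exact hn.trans_le (hmono n hq2.le)
    · intro a ha
      obtain ⟨δ, hδ, h⟩ := Metric.eventually_nhds_iff.1 (ht.eventually (gt_mem_nhds ha))
      obtain ⟨q, hq1, hq2⟩ := exists_rat_btwn (show t < t + δ by linarith)
      have : F q < a := h (by rw [Real.dist_eq, abs_lt]; constructor <;> linarith)
      filter_upwards [(hFq q).eventually (gt_mem_nhds this)] with n hn
      exact (hmono n hq1.le).trans_lt hn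

/-- Every tight sequence of random variables contains a determining subsequence. -/
theorem statement13
    {Ω : Type*} [MeasurableSpace Ω] (P : Measure Ω) [IsProbabilityMeasure P]
    (X : ℕ → Ω → ℝ) (hXmeas : ∀ n, Measurable (X n))
    (htight : ∀ ε > (0 : ℝ), ∃ K > (0 : ℝ), ∀ n, P {ω | K < |X n ω|} ≤ ENNReal.ofReal ε) :
    ∃ n : ℕ → ℕ, StrictMono n ∧ Determining P (fun k => X (n k)) := by
  have hmE : ∀ n (t : ℝ), MeasurableSet {ω | X n ω < t} :=
    fun n t => measurableSet_lt (hXmeas n) measurable_const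
  -- diagonal extraction
  obtain ⟨a, -, φ, hφ, hlim⟩ := (isCompact_univ_pi (ι := ℚ × ℕ × ℚ) (X := fun _ => ℝ)
    (s := fun _ => Set.Icc 0 1) fun _ => isCompact_Icc).tendsto_subseq
    (x := fun n i => P.real ({ω | X n ω < i.1} ∩ {ω | X i.2.1 ω < i.2.2}))
    (fun n i _ => ⟨measureReal_nonneg, measureReal_le_one⟩)
  rw [tendsto_pi_nhds] at hlim
  refine ⟨φ, hφ, ?_⟩
  let e : ℕ → ℚ → Lp ℝ 2 P := fun n q =>
    indicatorConstLp 2 (hmE n q) (measure_ne_top P _) (1 : ℝ)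
  have hweak : ∀ (q : ℚ) (g : Lp ℝ 2 P), CauchySeq (fun k => inner ℝ (e (φ k) q) g) := by
    intro q
    refine weak_conv_aux (Set.range fun i : ℕ × ℚ => e i.1 i.2) _
      (fun k => ⟨(φ k, q), rfl⟩) (fun k => ?_) ?_
    · refine norm_indicatorConstLp_le.trans ?_
      rw [norm_one, one_mul]
      exact Real.rpow_le_one measureReal_nonneg measureReal_le_one (by positivity)
    · rintro _ ⟨i, rfl⟩
      refine Tendsto.cauchySeq (x := a (q, i)) ((hlim (q, i)).congr fun k => ?_)
      exact (L2.real_inner_indicatorConstLp_one_indicatorConstLp_one (hmE _ _) (hmE _ _)).symm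
  intro A hA hPA
  have hpos : 0 < (P A).toReal := ENNReal.toReal_pos hPA (measure_ne_top P A)
  refine helly_aux (fun n t => (P (A ∩ {ω | X (φ n) ω < t})).toReal / (P A).toReal)
    ?_ ?_ ?_ ?_ ?_
  · intro n s t hst
    have : P (A ∩ {ω | X (φ n) ω < s}) ≤ P (A ∩ {ω | X (φ n) ω < t}) :=
      measure_mono (Set.inter_subset_inter_right _ fun ω (h : _ < s) => lt_of_lt_of_le h hst)
    have h2 := ENNReal.toReal_mono (measure_ne_top P _) this
    dsimp only
    gcongr
  · intro n t
    positivity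
  · intro n t
    rw [div_le_one hpos]
    exact ENNReal.toReal_mono (measure_ne_top P _) (measure_mono Set.inter_subset_left)
  · intro q
    obtain ⟨l, hl⟩ := cauchySeq_tendsto_of_complete
      (hweak q (indicatorConstLp 2 hA (measure_ne_top P _) (1 : ℝ)))
    refine Tendsto.cauchySeq (x := l / (P A).toReal) (Tendsto.div_const ?_ _)
    refine hl.congr fun n => ?_
    rw [L2.real_inner_indicatorConstLp_one_indicatorConstLp_one, Set.inter_comm]
    rfl
  · intro ε hε
    obtain ⟨K, hK, h⟩ := htight (ε * (P A).toReal) (by positivity)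
    have hr : ∀ n, P.real {ω | K < |X n ω|} ≤ ε * (P A).toReal := fun n =>
      ENNReal.toReal_le_of_le_ofReal (by positivity) (h n)
    refine ⟨K, fun n => ⟨?_, fun t ht => ?_⟩⟩
    · rw [div_le_iff₀ hpos]
      refine le_trans ?_ (hr (φ n))
      refine measureReal_mono (fun ω hω => ?_)
      have : X (φ n) ω < -K := hω.2
      exact (show K < |X (φ n) ω| from lt_abs.2 (Or.inr (by linarith)))
    · rw [le_div_iff₀ hpos]
      have h3 : P.real A ≤ P.real (A ∩ {ω | X (φ n) ω < t}) + P.real {ω | K < |X (φ n) ω|} := by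
        refine le_trans (measureReal_mono ?_) (measureReal_union_le _ _)
        intro ω hω
        by_cases hc : X (φ n) ω < t
        · exact Or.inl ⟨hω, hc⟩
        · exact Or.inr (show K < |X (φ n) ω| from lt_abs.2 (Or.inl (by linarith [not_lt.1 hc])))
      have h4 := hr (φ n)
      simp only [measureReal_def] at h3 h4
      linarith
end

section
/- Let 0 < α < 2 and let F be the distribution function of a symmetric probability distribution on ℝ such that 1 − F(x) = c₁ x^{−α} + β(x) x^{−α} for x > 0, where c₁ > 0 is a constant, β(x) → 0 as x → ∞, and β is non-increasing on [x₀, ∞) for some x₀ > 0. Then there exists a constant c > 0 such that the characteristic function φ of F satisfies φ(t) = 1 − c|t|^α + o(|t|^α) as t → 0; in other words, the distribution belongs to S(α, c). -/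
open MeasureTheory Filter Finset
open scoped Topology BoundedContinuousFunction ENNReal

namespace S14

lemma tail_bound {α c₁ : ℝ} (hα : 0 < α) {β G : ℝ → ℝ} (hc₁ : 0 < c₁)
    (hG1 : ∀ x, G x ≤ 1)
    (heq : ∀ x : ℝ, 0 < x → G x = c₁ * x ^ (-α) + β x * x ^ (-α))
    (hβlim : Tendsto β atTop (𝓝 0)) :
    ∃ K : ℝ, 0 < K ∧ ∀ x : ℝ, 0 < x → G x ≤ K * x ^ (-α) := by
  obtain ⟨X, hX⟩ := Filter.eventually_atTop.1 (hβlim.eventually (gt_mem_nhds one_pos))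
  have hX1 : (0 : ℝ) < max X 1 := lt_of_lt_of_le one_pos (le_max_right _ _)
  have hp : 0 < (max X 1) ^ α := Real.rpow_pos_of_pos hX1 _
  refine ⟨c₁ + 1 + (max X 1) ^ α, by positivity, fun x hx => ?_⟩
  have hxp : 0 < x ^ (-α) := Real.rpow_pos_of_pos hx _
  rcases le_total (max X 1) x with h | h
  · rw [heq x hx]
    have := hX x ((le_max_left _ _).trans h)
    nlinarith
  · have h1 : x ^ α ≤ (max X 1) ^ α := Real.rpow_le_rpow hx.le h hα.le
    have h2 : x ^ α * x ^ (-α) = 1 := by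
      rw [← Real.rpow_add hx]; simp
    have := hG1 x
    nlinarith [mul_le_mul_of_nonneg_right h1 hxp.le]

lemma tail_lim {α c₁ : ℝ} {β G : ℝ → ℝ}
    (heq : ∀ x : ℝ, 0 < x → G x = c₁ * x ^ (-α) + β x * x ^ (-α))
    (hβlim : Tendsto β atTop (𝓝 0)) (y : ℝ) (hy : 0 < y) :
    Tendsto (fun t : ℝ => t ^ (-α) * G (y / t)) (𝓝[>] 0) (𝓝 (c₁ * y ^ (-α))) := by
  have h1 : Tendsto (fun t : ℝ => y / t) (𝓝[>] 0) atTop := by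
    simp only [div_eq_mul_inv]
    exact tendsto_inv_nhdsGT_zero.const_mul_atTop hy
  have h2 : Tendsto (fun t : ℝ => (c₁ + β (y / t)) * y ^ (-α)) (𝓝[>] 0)
      (𝓝 ((c₁ + 0) * y ^ (-α))) :=
    ((hβlim.comp h1).const_add c₁).mul_const _
  rw [add_zero] at h2
  refine h2.congr' ?_
  filter_upwards [self_mem_nhdsWithin] with t ht
  have ht : 0 < t := ht
  have htp : 0 < t ^ (-α) := Real.rpow_pos_of_pos ht _
  rw [heq _ (div_pos hy ht), Real.div_rpow hy.le ht.le]
  field_simp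

lemma dct {α c₁ : ℝ} (hα2 : α < 2) {β G : ℝ → ℝ}
    (hG0 : ∀ x, 0 ≤ G x) (hGm : Measurable G) {K : ℝ} (hK : 0 < K)
    (hGK : ∀ x : ℝ, 0 < x → G x ≤ K * x ^ (-α))
    (heq : ∀ x : ℝ, 0 < x → G x = c₁ * x ^ (-α) + β x * x ^ (-α))
    (hβlim : Tendsto β atTop (𝓝 0)) (A : ℝ) (hA : 0 ≤ A) :
    Tendsto (fun t : ℝ => t ^ (-α) * ∫ y in Set.Ioc 0 A, Real.sin y * G (y / t)) (𝓝[>] 0)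
      (𝓝 (∫ y in Set.Ioc 0 A, Real.sin y * (c₁ * y ^ (-α)))) := by
  have key : Tendsto (fun t : ℝ => ∫ y in Set.Ioc 0 A, Real.sin y * (t ^ (-α) * G (y / t)))
      (𝓝[>] 0) (𝓝 (∫ y in Set.Ioc 0 A, Real.sin y * (c₁ * y ^ (-α)))) := by
    refine tendsto_integral_filter_of_dominated_convergence (fun y => K * y ^ (1 - α)) ?_ ?_ ?_ ?_
    · refine Eventually.of_forall fun t => ?_
      have : Measurable fun y : ℝ => Real.sin y * (t ^ (-α) * G (y / t)) :=
        Real.measurable_sin.mul ((hGm.comp (measurable_id.div_const t)).const_mul _)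
      exact this.aestronglyMeasurable
    · filter_upwards [self_mem_nhdsWithin] with t ht
      have ht : 0 < t := ht
      refine (ae_restrict_iff' measurableSet_Ioc).2 (Eventually.of_forall fun y hy => ?_)
      have hy0 : 0 < y := hy.1
      have htp : 0 < t ^ (-α) := Real.rpow_pos_of_pos ht _
      have hyp : 0 < y ^ (-α) := Real.rpow_pos_of_pos hy0 _
      have h1 : t ^ (-α) * G (y / t) ≤ K * y ^ (-α) := by
        have := hGK _ (div_pos hy0 ht)
        rw [Real.div_rpow hy0.le ht.le] at this
        calc t ^ (-α) * G (y / t) ≤ t ^ (-α) * (K * (y ^ (-α) / t ^ (-α))) := by gcongr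
          _ = _ := by field_simp
      have h0 : 0 ≤ t ^ (-α) * G (y / t) := mul_nonneg htp.le (hG0 _)
      rw [Real.norm_eq_abs, abs_mul, abs_of_nonneg h0]
      have hs : |Real.sin y| ≤ y := by
        have := Real.abs_sin_le_abs (x := y)
        rwa [abs_of_pos hy0] at this
      calc |Real.sin y| * (t ^ (-α) * G (y / t)) ≤ y * (K * y ^ (-α)) := by gcongr
        _ = K * (y ^ (1 : ℝ) * y ^ (-α)) := by rw [Real.rpow_one]; ring
        _ = _ := by rw [← Real.rpow_add hy0]; rfl
    · have := (intervalIntegral.intervalIntegrable_rpow' (a := 0) (b := A)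
        (r := 1 - α) (by linarith)).const_mul K
      exact (intervalIntegrable_iff_integrableOn_Ioc_of_le hA).1 this
    · refine (ae_restrict_iff' measurableSet_Ioc).2 (Eventually.of_forall fun y hy => ?_)
      exact (tail_lim heq hβlim y hy.1).const_mul _
  refine key.congr fun t => ?_
  rw [← integral_const_mul]
  congr 1; ext y; ring

lemma inner_int (A z : ℝ) (hA : 0 ≤ A) (hcA : Real.cos A = 1) :
    ∫ y in Set.Ioc 0 A, (Set.Iio z).indicator Real.sin y =
      (Set.Ioc 0 A).indicator (fun z => 1 - Real.cos z) z := by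
  rw [integral_indicator measurableSet_Iio, Measure.restrict_restrict measurableSet_Iio]
  rcases le_or_gt z 0 with h | h
  · have : Set.Iio z ∩ Set.Ioc 0 A = ∅ := by
      ext y; simp; intro h1 h2; linarith
    rw [this, Set.indicator_of_notMem (by simp [h])]; simp
  · rcases le_or_gt z A with h' | h'
    · have : Set.Iio z ∩ Set.Ioc 0 A = Set.Ioo 0 z := by
        ext y; simp; constructor
        · rintro ⟨a, b, c⟩; exact ⟨b, a⟩
        · rintro ⟨a, b⟩; exact ⟨b, a, by linarith⟩
      rw [this, ← integral_Ioc_eq_integral_Ioo, ← intervalIntegral.integral_of_le h.le,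
        integral_sin, Set.indicator_of_mem (Set.mem_Ioc.2 ⟨h, h'⟩)]; simp
    · have : Set.Iio z ∩ Set.Ioc 0 A = Set.Ioc 0 A := by
        ext y; simp; intro a b; linarith
      rw [this, ← intervalIntegral.integral_of_le hA, integral_sin, hcA,
        Set.indicator_of_notMem (by simp [h'])]; simp

lemma fub (μ : Measure ℝ) [IsProbabilityMeasure μ] (A : ℝ) (hA : 0 ≤ A) (hcA : Real.cos A = 1)
    (t : ℝ) (ht : 0 < t) :
    ∫ x, (Set.Ioc 0 A).indicator (fun z => 1 - Real.cos z) (t * x) ∂μ =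
      ∫ y in Set.Ioc 0 A, Real.sin y * μ.real (Set.Ioi (y / t)) := by
  simp_rw [← inner_int A _ hA hcA]
  have hset : MeasurableSet {p : ℝ × ℝ | p.2 < t * p.1} :=
    measurableSet_lt measurable_snd (measurable_fst.const_mul t)
  rw [integral_integral_swap]
  · congr 1; ext y
    have : ∀ x : ℝ, (Set.Iio (t * x)).indicator Real.sin y =
        (Set.Ioi (y / t)).indicator (fun _ => Real.sin y) x := by
      intro x
      simp only [Set.indicator, Set.mem_Iio, Set.mem_Ioi, div_lt_iff₀ ht, mul_comm]
    simp_rw [this]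
    rw [integral_indicator measurableSet_Ioi]
    simp [mul_comm]
  · have hm : Measurable (Function.uncurry fun x y : ℝ => (Set.Iio (t * x)).indicator Real.sin y) := by
      have : (Function.uncurry fun x y : ℝ => (Set.Iio (t * x)).indicator Real.sin y) =
        {p : ℝ × ℝ | p.2 < t * p.1}.indicator (fun p => Real.sin p.2) := by
        ext ⟨x, y⟩; simp [Set.indicator]
      rw [this]
      exact (Real.measurable_sin.comp measurable_snd).indicator hset
    refine Integrable.of_bound hm.aestronglyMeasurable 1 (Eventually.of_forall ?_)
    rintro ⟨x, y⟩
    simp only [Function.uncurry, Set.indicator]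
    split_ifs
    · exact Real.abs_sin_le_one y
    · simp

lemma cos_int (μ : Measure ℝ) [IsProbabilityMeasure μ] (t : ℝ) :
    Integrable (fun x => 1 - Real.cos (t * x)) μ := by
  refine Integrable.of_bound (by fun_prop) 2 (Eventually.of_forall fun x => ?_)
  rw [Real.norm_eq_abs, abs_le]
  constructor <;> linarith [Real.neg_one_le_cos (t * x), Real.cos_le_one (t * x)]

lemma charFn_eq (μ : Measure ℝ) [IsProbabilityMeasure μ] (hsymm : μ.map (fun x => -x) = μ)
    (t : ℝ) : charFn μ t = ((1 - 2 * ∫ x in Set.Ioi 0, (1 - Real.cos (|t| * x)) ∂μ : ℝ) : ℂ) := by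
  have habs : ∀ x, Real.cos (|t| * x) = Real.cos (t * x) := by
    intro x
    rcases abs_choice t with h | h <;> rw [h]
    rw [neg_mul, Real.cos_neg]
  simp_rw [habs]
  have hsw : ∀ f : ℝ → ℝ, Measurable f → ∫ x, f (-x) ∂μ = ∫ x, f x ∂μ := by
    intro f hf
    conv_rhs => rw [← hsymm]
    rw [integral_map measurable_neg.aemeasurable hf.aestronglyMeasurable]
  have hs0 : ∫ x, Real.sin (t * x) ∂μ = 0 := by
    have := hsw (fun x => Real.sin (t * x)) (by fun_prop)
    simp only [mul_neg, Real.sin_neg, integral_neg] at this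
    linarith
  have hsi : Integrable (fun x => Real.sin (t * x)) μ :=
    Integrable.of_bound (by fun_prop) 1 (Eventually.of_forall fun x => Real.abs_sin_le_one _)
  have hci : Integrable (fun x => Real.cos (t * x)) μ :=
    Integrable.of_bound (by fun_prop) 1 (Eventually.of_forall fun x => Real.abs_cos_le_one _)
  have h1 : charFn μ t = ((∫ x, Real.cos (t * x) ∂μ : ℝ) : ℂ) := by
    unfold charFn
    have : ∀ x : ℝ, Complex.exp (Complex.I * (t * x)) =
        ((Real.cos (t * x) : ℝ) : ℂ) + ((Real.sin (t * x) : ℝ) : ℂ) * Complex.I := by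
      intro x
      rw [mul_comm, Complex.exp_mul_I]; push_cast; rfl
    simp_rw [this]
    rw [integral_add hci.ofReal (hsi.ofReal.mul_const _), integral_mul_const,
      integral_complex_ofReal, integral_complex_ofReal, hs0]
    simp
  rw [h1]
  congr 1
  have h2 : ∫ x, (1 - Real.cos (t * x)) ∂μ = 1 - ∫ x, Real.cos (t * x) ∂μ := by
    rw [integral_sub (integrable_const _) hci]; simp
  have h3 : ∫ x, (1 - Real.cos (t * x)) ∂μ = 2 * ∫ x in Set.Ioi 0, (1 - Real.cos (t * x)) ∂μ := by
    rw [← integral_indicator measurableSet_Ioi]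
    set f : ℝ → ℝ := (Set.Ioi 0).indicator fun x => 1 - Real.cos (t * x) with hf
    have hfm : Measurable f := Measurable.indicator (by fun_prop) measurableSet_Ioi
    have hfi : Integrable f μ := (cos_int μ t).indicator measurableSet_Ioi
    have hdec : ∀ x, 1 - Real.cos (t * x) = f x + f (-x) := by
      intro x
      simp only [hf, Set.indicator, Set.mem_Ioi]
      rcases lt_trichotomy x 0 with h | h | h
      · simp [h, h.le]
      · simp [h]
      · simp [h, h.le]
    have hfi' : Integrable (fun x => f (-x)) μ := by
      have : Integrable f (μ.map fun x => -x) := by rw [hsymm]; exact hfi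
      exact this.comp_measurable measurable_neg
    simp_rw [hdec]
    rw [integral_add hfi hfi', hsw f hfm]; ring
  linarith

/-- comparison of the full integral with the truncated one -/
lemma trunc (μ : Measure ℝ) [IsProbabilityMeasure μ] (A : ℝ) (hA : 0 ≤ A)
    (hcA : Real.cos A = 1) (t : ℝ) (ht : 0 < t) :
    (∫ y in Set.Ioc 0 A, Real.sin y * μ.real (Set.Ioi (y / t))) ≤
        ∫ x in Set.Ioi 0, (1 - Real.cos (t * x)) ∂μ ∧
      ∫ x in Set.Ioi 0, (1 - Real.cos (t * x)) ∂μ ≤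
        (∫ y in Set.Ioc 0 A, Real.sin y * μ.real (Set.Ioi (y / t))) +
          2 * μ.real (Set.Ioi (A / t)) := by
  rw [← fub μ A hA hcA t ht, ← integral_indicator measurableSet_Ioi]
  have hfi : Integrable ((Set.Ioi 0).indicator fun x => 1 - Real.cos (t * x)) μ :=
    (cos_int μ t).indicator measurableSet_Ioi
  have hgi : Integrable
      (fun x => (Set.Ioc 0 A).indicator (fun z => 1 - Real.cos z) (t * x)) μ := by
    have hm : Measurable ((Set.Ioc 0 A).indicator (fun z => 1 - Real.cos z)) :=
      Measurable.indicator (by fun_prop) measurableSet_Ioc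
    refine Integrable.of_bound (hm.comp (measurable_const_mul t)).aestronglyMeasurable 2
      (Eventually.of_forall fun x => ?_)
    simp only [Function.comp, Set.indicator]
    split_ifs
    · rw [Real.norm_eq_abs, abs_le]
      constructor <;> linarith [Real.neg_one_le_cos (t * x), Real.cos_le_one (t * x)]
    · simp
  have hti : Integrable ((Set.Ioi (A / t)).indicator fun _ => (2 : ℝ)) μ :=
    (integrable_const _).indicator measurableSet_Ioi
  have htv : ∫ x, (Set.Ioi (A / t)).indicator (fun _ => (2 : ℝ)) x ∂μ =
      2 * μ.real (Set.Ioi (A / t)) := by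
    rw [integral_indicator measurableSet_Ioi]; simp [mul_comm]
  rw [← htv, ← integral_add hgi hti]
  constructor
  · refine integral_mono hgi hfi fun x => ?_
    simp only [Set.indicator, Set.mem_Ioc, Set.mem_Ioi, mul_pos_iff_of_pos_left ht]
    have := Real.cos_le_one (t * x)
    split_ifs with h1 h2 h2
    · exact le_rfl
    · exact absurd h1.1 h2
    · linarith
    · exact le_rfl
  · refine integral_mono hfi (hgi.add hti) fun x => ?_
    simp only [Set.indicator, Set.mem_Ioc, Set.mem_Ioi, mul_pos_iff_of_pos_left ht,
      div_lt_iff₀ ht]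
    have := Real.cos_le_one (t * x)
    have := Real.neg_one_le_cos (t * x)
    rw [mul_comm x t]
    split_ifs with h1 h2 h3 h4 h5 h6
    · linarith
    · linarith
    · linarith
    · exact absurd ⟨h1, not_lt.1 h4⟩ h2
    all_goals linarith

lemma lower (μ : Measure ℝ) [IsProbabilityMeasure μ] (t : ℝ) (ht : 0 < t) :
    (1 - Real.cos 1) * (μ.real (Set.Ioi (1 / t)) - μ.real (Set.Ioi (2 / t))) ≤
        ∫ x in Set.Ioi 0, (1 - Real.cos (t * x)) ∂μ := by
  have hle : 1 / t ≤ 2 / t := by gcongr; norm_num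
  have h1 : μ.real (Set.Ioi (1 / t)) - μ.real (Set.Ioi (2 / t)) =
      μ.real (Set.Ioc (1 / t) (2 / t)) := by
    rw [← measureReal_diff (Set.Ioi_subset_Ioi hle) measurableSet_Ioi, Set.Ioi_diff_Ioi]
  rw [h1, ← integral_indicator measurableSet_Ioi]
  have h2 : (1 - Real.cos 1) * μ.real (Set.Ioc (1 / t) (2 / t)) =
      ∫ x, (Set.Ioc (1 / t) (2 / t)).indicator (fun _ => 1 - Real.cos 1) x ∂μ := by
    rw [integral_indicator measurableSet_Ioc]; simp [mul_comm]
  rw [h2]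
  refine integral_mono ((integrable_const _).indicator measurableSet_Ioc)
    ((cos_int μ t).indicator measurableSet_Ioi) fun x => ?_
  simp only [Set.indicator, Set.mem_Ioc, Set.mem_Ioi, div_lt_iff₀ ht, le_div_iff₀ ht]
  have := Real.cos_le_one (t * x)
  split_ifs with h1 h2 h2
  · have : Real.cos (t * x) ≤ Real.cos 1 :=
      Real.cos_le_cos_of_nonneg_of_le_pi (by norm_num)
        (by nlinarith [Real.pi_gt_three]) (by nlinarith)
    linarith
  · exact absurd (pos_of_mul_pos_left (by linarith : 0 < x * t) ht.le) h2
  · linarith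
  · exact le_rfl

lemma squeeze_cauchy (J : ℝ → ℝ) (Jn e : ℕ → ℝ → ℝ) (L E : ℕ → ℝ)
    (hJ : ∀ n, ∀ t > 0, Jn n t ≤ J t ∧ J t ≤ Jn n t + e n t)
    (hL : ∀ n, Tendsto (Jn n) (𝓝[>] 0) (𝓝 (L n)))
    (hE : ∀ n, Tendsto (e n) (𝓝[>] 0) (𝓝 (E n)))
    (hE0 : Tendsto E atTop (𝓝 0)) : ∃ C, Tendsto J (𝓝[>] 0) (𝓝 C) := by
  have : Cauchy (map J (𝓝[>] 0)) := by
    rw [Metric.cauchy_iff]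
    refine ⟨inferInstance, fun ε hε => ?_⟩
    obtain ⟨n, hn⟩ := (hE0.eventually (gt_mem_nhds (by positivity : 0 < ε / 4))).exists
    refine ⟨Set.Ioo (L n - ε / 4) (L n + ε / 2), ?_, ?_⟩
    · rw [Filter.mem_map]
      filter_upwards [self_mem_nhdsWithin, (hE n).eventually (gt_mem_nhds hn),
        (hL n).eventually (lt_mem_nhds (by linarith : L n - ε / 4 < L n)),
        (hL n).eventually (gt_mem_nhds (by linarith : L n < L n + ε / 4))] with t ht h1 h2 h3
      obtain ⟨h4, h5⟩ := hJ n t ht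
      exact ⟨by linarith, by linarith⟩
    · intro x hx y hy
      rw [Real.dist_eq, abs_lt]
      constructor <;> linarith [hx.1, hx.2, hy.1, hy.2]
  obtain ⟨C, hC⟩ := CompleteSpace.complete this
  exact ⟨C, hC⟩

end S14

/-- Let `F` be the distribution function of a symmetric probability distribution `μ` on `ℝ`
with `1 - F(x) = c₁ x^{-α} + β(x) x^{-α}` for `x > 0`, where `c₁ > 0`, `β(x) → 0` as
`x → ∞` and `β` is non-increasing on `[x₀, ∞)`. Then there is `c > 0` with
`μ ∈ S(α, c)`, i.e. the characteristic function satisfies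
`φ(t) = 1 - c|t|^α + o(|t|^α)` as `t → 0`. -/
theorem statement14
    (α : ℝ) (hα : 0 < α) (hα2 : α < 2)
    (μ : Measure ℝ) [IsProbabilityMeasure μ] (hsymm : μ.map (fun x => -x) = μ)
    (F : ℝ → ℝ) (hF : ∀ t : ℝ, F t = (μ (Set.Iic t)).toReal)
    (c₁ : ℝ) (hc₁ : 0 < c₁) (β : ℝ → ℝ)
    (heq : ∀ x : ℝ, 0 < x → 1 - F x = c₁ * x ^ (-α) + β x * x ^ (-α))
    (hβlim : Tendsto β atTop (𝓝 0))
    (x₀ : ℝ) (hx₀ : 0 < x₀) (hβmono : AntitoneOn β (Set.Ici x₀)) :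
    ∃ c : ℝ, 0 < c ∧ MemS α c μ := by
  have hGeq : ∀ x : ℝ, 0 < x → μ.real (Set.Ioi x) = c₁ * x ^ (-α) + β x * x ^ (-α) := by
    intro x hx
    rw [← heq x hx, hF, ← Set.compl_Iic, probReal_compl_eq_one_sub measurableSet_Iic]
    rfl
  obtain ⟨K, hK, hGK⟩ := S14.tail_bound (G := fun x => μ.real (Set.Ioi x)) hα hc₁
    (fun x => measureReal_le_one) hGeq hβlim
  have hGm : Measurable fun x : ℝ => μ.real (Set.Ioi x) := by
    refine Antitone.measurable fun x y hxy => ?_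
    exact measureReal_mono (Set.Ioi_subset_Ioi hxy)
  have hlim := S14.tail_lim (G := fun x => μ.real (Set.Ioi x)) hGeq hβlim
  set I : ℝ → ℝ := fun t => ∫ x in Set.Ioi 0, (1 - Real.cos (t * x)) ∂μ with hI
  have hcos : ∀ n : ℕ, Real.cos ((n + 1 : ℕ) * (2 * Real.pi)) = 1 :=
    fun n => Real.cos_nat_mul_two_pi _
  have hApos : ∀ n : ℕ, 0 < ((n + 1 : ℕ) : ℝ) * (2 * Real.pi) := by
    intro n; positivity
  obtain ⟨C, hC⟩ := S14.squeeze_cauchy (fun t => t ^ (-α) * I t)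
    (fun n t => t ^ (-α) * ∫ y in Set.Ioc 0 (((n + 1 : ℕ) : ℝ) * (2 * Real.pi)),
      Real.sin y * μ.real (Set.Ioi (y / t)))
    (fun n t => 2 * (t ^ (-α) * μ.real (Set.Ioi ((((n + 1 : ℕ) : ℝ) * (2 * Real.pi)) / t))))
    _ (fun n => 2 * (c₁ * (((n + 1 : ℕ) : ℝ) * (2 * Real.pi)) ^ (-α)))
    (by
      intro n t ht
      have htp : 0 < t ^ (-α) := Real.rpow_pos_of_pos ht _
      obtain ⟨h1, h2⟩ := S14.trunc μ _ (hApos n).le (hcos n) t ht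
      refine ⟨mul_le_mul_of_nonneg_left h1 htp.le, ?_⟩
      have := mul_le_mul_of_nonneg_left h2 htp.le
      simp only [hI]
      linarith)
    (fun n => S14.dct (G := fun x => μ.real (Set.Ioi x)) hα2 (fun x => measureReal_nonneg)
      hGm hK hGK hGeq hβlim _ (hApos n).le)
    (fun n => (hlim _ (hApos n)).const_mul 2)
    (by
      have h1 : Tendsto (fun n : ℕ => ((n + 1 : ℕ) : ℝ) * (2 * Real.pi)) atTop atTop :=
        ((tendsto_natCast_atTop_atTop (R := ℝ)).comp (tendsto_add_atTop_nat 1)).atTop_mul_const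
          (by positivity)
      have h2 := (((tendsto_rpow_neg_atTop hα).comp h1).const_mul c₁).const_mul 2
      simpa using h2)
  have hcos1 : 0 < 1 - Real.cos 1 := by linarith [Real.cos_one_le]
  have hCpos : 0 < C := by
    have h1 : Tendsto (fun t : ℝ => (1 - Real.cos 1) * (t ^ (-α) * μ.real (Set.Ioi (1 / t)) -
        t ^ (-α) * μ.real (Set.Ioi (2 / t)))) (𝓝[>] 0)
        (𝓝 ((1 - Real.cos 1) * (c₁ * 1 ^ (-α) - c₁ * 2 ^ (-α)))) :=
      ((hlim 1 one_pos).sub (hlim 2 two_pos)).const_mul _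
    have h2 : (1 - Real.cos 1) * (c₁ * 1 ^ (-α) - c₁ * 2 ^ (-α)) ≤ C := by
      refine le_of_tendsto_of_tendsto h1 hC ?_
      filter_upwards [self_mem_nhdsWithin] with t ht
      have htp : 0 < t ^ (-α) := Real.rpow_pos_of_pos ht _
      have := mul_le_mul_of_nonneg_left (S14.lower μ t ht) htp.le
      simp only [hI]
      linarith
    refine lt_of_lt_of_le (mul_pos hcos1 ?_) h2
    have : (2 : ℝ) ^ (-α) < 1 := Real.rpow_lt_one_of_one_lt_of_neg (by norm_num) (by linarith)
    rw [Real.one_rpow]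
    nlinarith
  refine ⟨2 * C, by positivity, inferInstance, hsymm, ?_⟩
  rw [Asymptotics.isLittleO_iff]
  intro ε hε
  have h1 : ∀ᶠ t in 𝓝[>] (0 : ℝ), |t ^ (-α) * I t - C| < ε / 2 := by
    have := (Metric.tendsto_nhds.1 hC) (ε / 2) (by positivity)
    simpa [Real.dist_eq] using this
  obtain ⟨δ, hδ, hδ'⟩ := mem_nhdsGT_iff_exists_Ioo_subset.1 h1
  have hδ : 0 < δ := hδ
  filter_upwards [Metric.ball_mem_nhds (0 : ℝ) hδ] with t ht
  rw [S14.charFn_eq μ hsymm t, ← Complex.ofReal_sub, Complex.norm_real, Real.norm_eq_abs,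
    Real.norm_eq_abs, abs_of_nonneg (Real.rpow_nonneg (abs_nonneg t) α)]
  rcases eq_or_ne t 0 with rfl | h0
  · simp [Real.zero_rpow hα.ne']
  · have hta : 0 < |t| := abs_pos.2 h0
    have htd : |t| < δ := by simpa [Real.dist_eq] using ht
    have h2 : |(|t| ^ (-α) * I |t| - C)| < ε / 2 := hδ' ⟨hta, htd⟩
    have hp : 0 < |t| ^ α := Real.rpow_pos_of_pos hta _
    have h3 : |t| ^ α * |t| ^ (-α) = 1 := by rw [← Real.rpow_add hta]; simp
    have h4 : (1 - 2 * I |t|) - (1 - 2 * C * |t| ^ α) =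
        -(2 * |t| ^ α * (|t| ^ (-α) * I |t| - C)) := by
      linear_combination (2 * I |t|) * h3
    change |(1 - 2 * I |t|) - (1 - 2 * C * |t| ^ α)| ≤ _
    rw [h4, abs_neg, abs_mul, abs_of_pos (by positivity : 0 < 2 * |t| ^ α)]
    nlinarith
end
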